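/- arXiv:1704.01847 — 5 statements merged into one kernel-verified Lean document; each statement's English description precedes it below -/
import Mathlib

section
/- Let (𝒳, d) be a metric space and μ a Borel probability measure on 𝒳. A point x̂ ∈ 𝒳 is a mode of μ (i.e., μ admits a fictitious density f with f(x̂) = sup_{x ∈ 𝒳} f(x)) if and only if μ(B(x̂, ε)) > 0 for every ε > 0 and, for every x ∈ 𝒳, the limit lim_{ε↓0} μ(B(x, ε)) / μ(B(x̂, ε)) exists and is at most 1. -/
open MeasureTheory Filter

/-- A point `xh` of a metric space is a mode of a Borel probability
measure `μ` (i.e. `μ` admits a fictitious density attaining its supremum at `xh`)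
iff every ball around `xh` has positive measure and, for every `x`, the limit of
`μ(B(x,ε))/μ(B(xh,ε))` as `ε ↓ 0` exists and is at most `1`. -/
theorem stmt0 {X : Type*} [MetricSpace X] [MeasurableSpace X] [BorelSpace X]
    (μ : Measure X) [IsProbabilityMeasure μ] (xh : X) :
    (∃ f : X → ℝ, (∀ x, 0 ≤ f x) ∧ (∃ x, 0 < f x) ∧
      (∃ g : ℝ → ℝ, (∀ ε > (0:ℝ), 0 < g ε) ∧
        ∀ x, Tendsto (fun ε => (μ (Metric.ball x ε)).toReal / g ε)
          (nhdsWithin 0 (Set.Ioi 0)) (nhds (f x))) ∧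
      (∀ x, f x ≤ f xh)) ↔
    ((∀ ε > (0:ℝ), 0 < μ (Metric.ball xh ε)) ∧
      ∀ x : X, ∃ L : ℝ, L ≤ 1 ∧
        Tendsto (fun ε => (μ (Metric.ball x ε)).toReal / (μ (Metric.ball xh ε)).toReal)
          (nhdsWithin 0 (Set.Ioi 0)) (nhds L)) := by
  constructor
  · rintro ⟨f, hf0, ⟨x0, hx0⟩, ⟨g, hg, hlim⟩, hmax⟩
    have hpos : 0 < f xh := lt_of_lt_of_le hx0 (hmax x0)
    refine ⟨?_, ?_⟩
    · intro ε hε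
      have h1 : ∀ᶠ e in nhdsWithin (0:ℝ) (Set.Ioi 0), 0 < (μ (Metric.ball xh e)).toReal / g e :=
        (hlim xh).eventually (lt_mem_nhds hpos)
      have h2 : ∀ᶠ e in nhdsWithin (0:ℝ) (Set.Ioi 0), e ∈ Set.Ioo (0:ℝ) ε :=
        Ioo_mem_nhdsGT hε
      obtain ⟨e, he1, he2⟩ := (h1.and h2).exists
      have h3 : 0 < (μ (Metric.ball xh e)).toReal := by
        by_contra hc
        have h0 : (μ (Metric.ball xh e)).toReal = 0 := le_antisymm (not_lt.mp hc) ENNReal.toReal_nonneg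
        rw [h0, zero_div] at he1
        exact lt_irrefl _ he1
      exact lt_of_lt_of_le (ENNReal.toReal_pos_iff.mp h3).1
        (measure_mono (Metric.ball_subset_ball he2.2.le))
    · intro x
      refine ⟨f x / f xh, (div_le_one hpos).mpr (hmax x), ?_⟩
      refine ((hlim x).div (hlim xh) hpos.ne').congr' ?_
      filter_upwards [self_mem_nhdsWithin] with e he
      exact div_div_div_cancel_right₀ (hg e he).ne' _ _
  · rintro ⟨hpos, hlim⟩
    have hp : ∀ ε > (0:ℝ), 0 < (μ (Metric.ball xh ε)).toReal := fun ε hε =>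
      ENNReal.toReal_pos (hpos ε hε).ne' (measure_ne_top _ _)
    choose f hf1 hf using hlim
    have hxh : f xh = 1 := by
      refine tendsto_nhds_unique (hf xh) (tendsto_const_nhds.congr' ?_)
      filter_upwards [self_mem_nhdsWithin] with e he
      exact (div_self (hp e he).ne').symm
    refine ⟨f, fun x => ?_, ⟨xh, by rw [hxh]; exact one_pos⟩, ⟨_, hp, hf⟩, fun x => by rw [hxh]; exact hf1 x⟩
    exact ge_of_tendsto' (hf x) fun e => by positivity
end

section
/- Let 𝒳 be a first-countable topological space, and let {f_i}_{i=1}^∞, f_i : 𝒳 → ℝ̄, be a sequence of functions that hypo-converges to f : 𝒳 → ℝ̄. Suppose 𝒩 ⊆ ℕ is an infinite set of indices, for each i ∈ 𝒩 the point x_i* ∈ 𝒳 is a maximizer of f_i (i.e., f_i(x_i*) = sup_{x ∈ 𝒳} f_i(x)), and the subsequence (x_i*)_{i ∈ 𝒩} converges to a point x* ∈ 𝒳. Then x* is a maximizer of f, i.e., f(x*) = sup_{x ∈ 𝒳} f(x). -/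
open Filter

/-- If a sequence of extended-real-valued functions on a first-countable
space hypo-converges to `flim`, and an (infinite) subsequence of maximizers converges,
then its limit is a maximizer of `flim`. The infinite index set `𝒩 ⊆ ℕ` is encoded by
a strictly monotone enumeration `φ : ℕ → ℕ`. -/
theorem stmt3 {X : Type*} [TopologicalSpace X] [FirstCountableTopology X]
    (f : ℕ → X → EReal) (flim : X → EReal)
    (ha : ∀ (x : ℕ → X) (x₀ : X), Tendsto x atTop (nhds x₀) →
      limsup (fun i => f i (x i)) atTop ≤ flim x₀)
    (hb : ∀ x₀ : X, ∃ x : ℕ → X, Tendsto x atTop (nhds x₀) ∧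
      flim x₀ ≤ liminf (fun i => f i (x i)) atTop)
    (φ : ℕ → ℕ) (hφ : StrictMono φ) (xstar : ℕ → X)
    (hmax : ∀ k, f (φ k) (xstar k) = ⨆ x, f (φ k) x)
    (xlim : X) (hconv : Tendsto xstar atTop (nhds xlim)) :
    flim xlim = ⨆ x, flim x := by
  classical
  set y : ℕ → X := Function.extend φ xstar (fun _ => xlim) with hy
  have hyφ : ∀ k, y (φ k) = xstar k := fun k => hφ.injective.extend_apply _ _ k
  have hyt : Tendsto y atTop (nhds xlim) := by
    intro U hU
    obtain ⟨K, hK⟩ := eventually_atTop.1 (hconv.eventually hU)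
    refine mem_atTop_sets.2 ⟨φ K, fun i hi => ?_⟩
    by_cases h : ∃ k, φ k = i
    · obtain ⟨k, rfl⟩ := h
      have : xstar k ∈ U := hK k (hφ.le_iff_le.1 hi)
      simpa [hyφ] using this
    · have : y i = xlim := Function.extend_apply' _ _ _ h
      simpa [this] using mem_of_mem_nhds hU
  refine le_antisymm (le_iSup flim xlim) (iSup_le fun x₀ => ?_)
  obtain ⟨x, -, hx⟩ := hb x₀
  have hle : map φ atTop ≤ atTop := hφ.tendsto_atTop
  calc flim x₀ ≤ liminf (fun i => f i (x i)) atTop := hx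
    _ ≤ liminf (fun i => f i (x i)) (map φ atTop) := liminf_le_liminf_of_le hle
    _ ≤ liminf (fun i => f i (y i)) (map φ atTop) := by
        refine liminf_le_liminf (eventually_map.2 (Eventually.of_forall fun k => ?_))
        rw [hyφ, hmax]
        exact le_iSup (f (φ k)) _
    _ ≤ limsup (fun i => f i (y i)) (map φ atTop) := liminf_le_limsup
    _ ≤ limsup (fun i => f i (y i)) atTop := limsup_le_limsup_of_le hle
    _ ≤ flim xlim := ha y xlim hyt
end

section
/- Let x ∈ W²_n, z₀ ∈ ℝ^q and θ ∈ int S, and let (x̃_i, ζ_i, ϑ_i) be a sequence with x̃_i ∈ PL(𝒫_i, ℝⁿ), ζ_i ∈ ℝ^q, ϑ_i ∈ ℝ^m such that lim_{i→∞} (‖x̃_i − x‖_{W²} + |ζ_i − z₀| + |ϑ_i − θ|) = 0. Let z̃_i ∈ PL(𝒫_i, ℝ^q) be the Euler-discretized clean-state path associated with (x̃_i, ζ_i, ϑ_i), and let z ∈ W²_q be the unique solution of the initial value problem ż(t) = h(t, x(t), z(t), θ), z(0) = z₀. Then lim_{i→∞} ‖z̃_i − z‖_∞ = 0. -/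
open MeasureTheory Filter Set

lemma aux_pc {E : Type*} [NormedAddCommGroup E] (N : ℕ) (t : ℕ → ℝ) (h0 : t 0 = 0)
    (hm : ∀ k < N, t k < t (k + 1)) (d : ℝ → E)
    (hd : ∀ k < N, ∃ b : E, ∀ s ∈ Ico (t k) (t (k + 1)), d s = b) :
    ∀ k ≤ N, 0 ≤ t k ∧ IntegrableOn d (Ico 0 (t k)) := by
  intro k
  induction k with
  | zero => intro _; simp [h0]
  | succ k ih =>
    intro hk
    obtain ⟨h1, h2⟩ := ih (by omega)
    have h3 := hm k (by omega)
    refine ⟨by linarith, ?_⟩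
    rw [← Ico_union_Ico_eq_Ico h1 h3.le]
    refine h2.union ?_
    obtain ⟨b, hb⟩ := hd k (by omega)
    have : IntegrableOn (fun _ => b) (Ico (t k) (t (k + 1))) := by
      apply integrableOn_const
      · simp
      · simp
    exact this.congr_fun (fun s hs => (hb s hs).symm) measurableSet_Ico

lemma aux_step {E : Type*} [NormedAddCommGroup E] [NormedSpace ℝ E] [CompleteSpace E]
    (tf : ℝ) (g z : ℝ → E) (z0 : E)
    (hg : ContinuousOn g (Icc 0 tf)) (hz : ∀ t ∈ Icc (0:ℝ) tf, z t = z0 + ∫ s in Ioc (0:ℝ) t, g s)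
    (a s C : ℝ) (ha : 0 ≤ a) (has : a ≤ s) (hs : s ≤ tf) (v : E)
    (hC : ∀ r ∈ Ioc a s, ‖g r - v‖ ≤ C) : ‖z s - z a - (s - a) • v‖ ≤ C * (s - a) := by
  have e1 : z s - z a = ∫ r in a..s, g r := by
    rw [hz s ⟨by linarith, hs⟩, hz a ⟨ha, by linarith⟩,
      ← intervalIntegral.integral_of_le ha, ← intervalIntegral.integral_of_le (ha.trans has),
      add_sub_add_left_eq_sub]
    refine intervalIntegral.integral_interval_sub_left ?_ ?_
    · apply ContinuousOn.intervalIntegrable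
      rw [uIcc_of_le (ha.trans has)]
      exact hg.mono (Icc_subset_Icc le_rfl hs)
    · apply ContinuousOn.intervalIntegrable
      rw [uIcc_of_le ha]
      exact hg.mono (Icc_subset_Icc le_rfl (has.trans hs))
  have e2 : (s - a) • v = ∫ r in a..s, v := by simp
  rw [e1, e2, ← intervalIntegral.integral_sub]
  · have := intervalIntegral.norm_integral_le_of_norm_le_const (a := a) (b := s)
      (f := fun r => g r - v) (C := C) (by rwa [uIoc_of_le has])
    rwa [abs_of_nonneg (by linarith)] at this
  · apply ContinuousOn.intervalIntegrable
    rw [uIcc_of_le has]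
    exact hg.mono (Icc_subset_Icc ha hs)
  · simp

lemma aux_x {E : Type*} [NormedAddCommGroup E] [NormedSpace ℝ E] [CompleteSpace E]
    (tf : ℝ) (htf : 0 < tf) (f e : ℝ → E)
    (hf : IntegrableOn f (Ioc 0 tf)) (hf2 : IntegrableOn (fun s => ‖f s‖ ^ 2) (Ioc 0 tf))
    (he : IntegrableOn e (Ioc 0 tf)) (he2 : IntegrableOn (fun s => ‖e s‖ ^ 2) (Ioc 0 tf))
    (x y : ℝ → E) (hx : ∀ t ∈ Icc (0:ℝ) tf, x t = x 0 + ∫ s in Ioc (0:ℝ) t, f s)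
    (hy : ∀ t ∈ Icc (0:ℝ) tf, y t = y 0 + ∫ s in Ioc (0:ℝ) t, e s)
    (B : ℝ) (hB : 0 < B)
    (hA : Real.sqrt (‖x 0 - y 0‖ ^ 2 + ∫ s in Ioc (0:ℝ) tf, ‖f s - e s‖ ^ 2) ≤ B) :
    ∀ t ∈ Icc (0:ℝ) tf, ‖x t - y t‖ ≤ B * (tf + 2) := by
  intro t ht
  have hsq : IntegrableOn (fun s => ‖f s - e s‖ ^ 2) (Ioc 0 tf) := by
    have := ((memLp_two_iff_integrable_sq_norm hf.1).2 hf2).sub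
      ((memLp_two_iff_integrable_sq_norm he.1).2 he2)
    exact (memLp_two_iff_integrable_sq_norm this.1).1 this
  have hI : 0 ≤ ∫ s in Ioc (0:ℝ) tf, ‖f s - e s‖ ^ 2 := integral_nonneg fun s => by positivity
  rw [Real.sqrt_le_left hB.le] at hA
  have h1 : ‖x 0 - y 0‖ ≤ B := by
    refine abs_le_of_sq_le_sq' ?_ hB.le |>.2
    linarith
  have h2 : (∫ s in Ioc (0:ℝ) tf, ‖f s - e s‖ ^ 2) ≤ B ^ 2 := by
    nlinarith [sq_nonneg ‖x 0 - y 0‖]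
  have hfe : IntegrableOn (fun s => f s - e s) (Ioc 0 tf) := hf.sub he
  have hsub : Ioc 0 t ⊆ Ioc 0 tf := Ioc_subset_Ioc le_rfl ht.2
  have h3 : (∫ s in Ioc (0:ℝ) tf, ‖f s - e s‖) ≤ B * (tf + 1) := by
    have : (∫ s in Ioc (0:ℝ) tf, ‖f s - e s‖) ≤ ∫ s in Ioc (0:ℝ) tf, (B + B⁻¹ * ‖f s - e s‖ ^ 2) := by
      apply integral_mono hfe.norm
      · exact (integrable_const B).add (hsq.const_mul _)
      · intro s
        have : B + B⁻¹ * ‖f s - e s‖ ^ 2 - ‖f s - e s‖ =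
          B⁻¹ * ((B - ‖f s - e s‖ / 2) ^ 2 + 3 / 4 * ‖f s - e s‖ ^ 2) := by
          field_simp; ring
        have : 0 ≤ B + B⁻¹ * ‖f s - e s‖ ^ 2 - ‖f s - e s‖ := by rw [this]; positivity
        simp only
        linarith
    rw [integral_add (integrable_const B) (hsq.const_mul _), integral_const_mul] at this
    simp only [integral_const, MeasurableSet.univ, measureReal_restrict_apply, univ_inter,
      Real.volume_real_Ioc_of_le htf.le, smul_eq_mul] at this
    have h4 : B⁻¹ * (∫ s in Ioc (0:ℝ) tf, ‖f s - e s‖ ^ 2) ≤ B⁻¹ * B ^ 2 := by gcongr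
    have h5 : B⁻¹ * B ^ 2 = B := by field_simp
    linarith
  have h6 : x t - y t = (x 0 - y 0) + ∫ s in Ioc (0:ℝ) t, (f s - e s) := by
    rw [hx t ht, hy t ht, integral_sub (hf.mono_set hsub) (he.mono_set hsub)]
    abel
  have h7 : ‖∫ s in Ioc (0:ℝ) t, (f s - e s)‖ ≤ ∫ s in Ioc (0:ℝ) tf, ‖f s - e s‖ :=
    (norm_integral_le_integral_norm _).trans
      (setIntegral_mono_set hfe.norm (ae_of_all _ fun s => norm_nonneg _) hsub.eventuallyLE)
  rw [h6]
  refine (norm_add_le _ _).trans ?_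
  linarith

/-- convergence of Euler-discretized clean-state paths: if
`(x̃_i, ζ_i, ϑ_i) → (x, z₀, θ)` with `θ ∈ int S`, then the associated
Euler-discretized clean-state paths `z̃_i` converge, in supremum norm, to the unique
solution `z` of `ż = h(t, x, z, θ)`, `z(0) = z₀`. Piecewise linear `x̃_i ∈ PL(𝒫_i)`
are encoded by their piecewise constant derivatives `d i`; the `W²` function `x`
by the pair `(x, x')`. -/
theorem stmt6 {n q m : ℕ} (tf : ℝ) (htf : 0 < tf)
    (N : ℕ → ℕ) (hN1 : ∀ i, 1 ≤ N i) (tP : ℕ → ℕ → ℝ)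
    (htP0 : ∀ i, tP i 0 = 0) (htPN : ∀ i, tP i (N i) = tf)
    (htPmono : ∀ i, ∀ k < N i, tP i k < tP i (k + 1))
    (hnested : ∀ i, ∀ k ≤ N i, ∃ k' ≤ N (i + 1), tP (i + 1) k' = tP i k)
    (hmesh : Tendsto (fun i => ⨆ k : Fin (N i), (tP i (k.1 + 1) - tP i k.1))
      atTop (nhds 0))
    (S : Set (EuclideanSpace ℝ (Fin m)))
    (h : ℝ → EuclideanSpace ℝ (Fin n) → EuclideanSpace ℝ (Fin q) →
      EuclideanSpace ℝ (Fin m) → EuclideanSpace ℝ (Fin q))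
    (hhc : Continuous fun p : ℝ × EuclideanSpace ℝ (Fin n) × EuclideanSpace ℝ (Fin q) ×
      EuclideanSpace ℝ (Fin m) => h p.1 p.2.1 p.2.2.1 p.2.2.2)
    (ρh : ℝ → ℝ) (hρh : Tendsto ρh (nhdsWithin 0 (Ioi 0)) (nhds 0))
    (hhu : ∀ ε > (0:ℝ), ∀ t ∈ Icc (0:ℝ) tf, ∀ t' ∈ Icc (0:ℝ) tf,
      ∀ (a a' : EuclideanSpace ℝ (Fin n)) (b b' : EuclideanSpace ℝ (Fin q))
        (c c' : EuclideanSpace ℝ (Fin m)), c ∈ S → c' ∈ S →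
      |t - t'| ≤ ε → ‖a - a'‖ ≤ ε → ‖b - b'‖ ≤ ε → ‖c - c'‖ ≤ ε →
      ‖h t a b c - h t' a' b' c'‖ ≤ ρh ε)
    (Lh : EuclideanSpace ℝ (Fin m) → ℝ) (hLh : ∀ θ ∈ S, 0 < Lh θ)
    (hhLip : ∀ θ ∈ S, ∀ t ∈ Icc (0:ℝ) tf,
      ∀ (a a' : EuclideanSpace ℝ (Fin n)) (b b' : EuclideanSpace ℝ (Fin q)),
      ‖h t a b θ - h t a' b' θ‖ ≤ Lh θ * (‖a - a'‖ + ‖b - b'‖))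
    -- the limit point
    (x x' : ℝ → EuclideanSpace ℝ (Fin n))
    (hInt : IntegrableOn x' (Icc 0 tf))
    (hL2 : IntegrableOn (fun t => ‖x' t‖ ^ 2) (Icc 0 tf))
    (hAC : ∀ t ∈ Icc (0:ℝ) tf, x t = x 0 + ∫ s in Ioc (0:ℝ) t, x' s)
    (z0 : EuclideanSpace ℝ (Fin q))
    (θ : EuclideanSpace ℝ (Fin m)) (hθ : θ ∈ interior S)
    -- the approximating sequence
    (xt d : ℕ → ℝ → EuclideanSpace ℝ (Fin n))
    (hdpc : ∀ i, ∀ k < N i, ∃ b : EuclideanSpace ℝ (Fin n),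
      ∀ s ∈ Ico (tP i k) (tP i (k + 1)), d i s = b)
    (hxtAC : ∀ i, ∀ s ∈ Icc (0:ℝ) tf, xt i s = xt i 0 + ∫ u in Ioc (0:ℝ) s, d i u)
    (ζ : ℕ → EuclideanSpace ℝ (Fin q)) (ϑ : ℕ → EuclideanSpace ℝ (Fin m))
    (hconv : Tendsto (fun i =>
      Real.sqrt (‖xt i 0 - x 0‖ ^ 2 + ∫ s in Ioc (0:ℝ) tf, ‖d i s - x' s‖ ^ 2)
      + ‖ζ i - z0‖ + ‖ϑ i - θ‖) atTop (nhds 0))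
    -- the Euler-discretized clean-state paths
    (zt : ℕ → ℝ → EuclideanSpace ℝ (Fin q))
    (hzt0 : ∀ i, zt i 0 = ζ i)
    (hztrec : ∀ i, ∀ k < N i, ∀ s ∈ Ioc (tP i k) (tP i (k + 1)),
      zt i s = zt i (tP i k) +
        (s - tP i k) • h (tP i k) (xt i (tP i k)) (zt i (tP i k)) (ϑ i))
    -- the limit clean-state path: solution of the IVP
    (z : ℝ → EuclideanSpace ℝ (Fin q)) (hzc : ContinuousOn z (Icc 0 tf))
    (hz : ∀ t ∈ Icc (0:ℝ) tf, z t = z0 + ∫ s in Ioc (0:ℝ) t, h s (x s) (z s) θ) :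
    Tendsto (fun i => ⨆ t : Icc (0:ℝ) tf, ‖zt i t.1 - z t.1‖) atTop (nhds 0) := by
  have hθS : θ ∈ S := interior_subset hθ
  have hL := hLh θ hθS
  set L := Lh θ with hLdef
  have hxc : ContinuousOn x (Icc 0 tf) := by
    have : ContinuousOn (fun t => x 0 + ∫ s in Ioc (0:ℝ) t, x' s) (Icc 0 tf) :=
      continuousOn_const.add (intervalIntegral.continuousOn_primitive hInt)
    exact this.congr hAC
  have hgc : ContinuousOn (fun r => h r (x r) (z r) θ) (Icc 0 tf) :=
    hhc.comp_continuousOn (continuousOn_id.prodMk (hxc.prodMk (hzc.prodMk continuousOn_const)))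
  have hguc := isCompact_Icc.uniformContinuousOn_of_continuous hgc
  rw [Metric.uniformContinuousOn_iff] at hguc
  -- main estimate
  have key : ∀ η > 0, ∀ᶠ i in atTop, ∀ t ∈ Icc (0:ℝ) tf,
      ‖zt i t - z t‖ ≤ (η + η * tf) * Real.exp (L * tf) := by
    intro η hη
    obtain ⟨δ, hδ, hgδ⟩ := hguc (η / 3) (by positivity)
    obtain ⟨ε, hεpos, hερ⟩ : ∃ ε > 0, ρh ε < η / 3 := by
      have h1 : ∀ᶠ e in nhdsWithin (0:ℝ) (Ioi 0), ρh e < η / 3 :=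
        hρh.eventually (gt_mem_nhds (by positivity))
      obtain ⟨e, h2, h3⟩ := (h1.and self_mem_nhdsWithin).exists
      exact ⟨e, h3, h2⟩
    obtain ⟨r, hr, hrS⟩ := Metric.isOpen_iff.1 isOpen_interior θ hθ
    set B := η / 3 / (L * (tf + 2)) with hBdef
    have hB : 0 < B := by positivity
    have hmin : 0 < min (min η ε) (min r B) := by positivity
    filter_upwards [hmesh.eventually (gt_mem_nhds hδ), hconv.eventually (gt_mem_nhds hmin)]
      with i hi1 hi2
    have hs0 := Real.sqrt_nonneg (‖xt i 0 - x 0‖ ^ 2 + ∫ s in Ioc (0:ℝ) tf, ‖d i s - x' s‖ ^ 2)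
    have hs1 := norm_nonneg (ζ i - z0)
    have hs2 := norm_nonneg (ϑ i - θ)
    simp only [lt_min_iff] at hi2
    obtain ⟨⟨c1, c2⟩, c3, c4⟩ := hi2
    have hϑS : ϑ i ∈ S := by
      apply interior_subset
      apply hrS
      rw [Metric.mem_ball, dist_eq_norm]
      linarith
    have hstep : ∀ k < N i, tP i (k + 1) - tP i k < δ := by
      intro k hk
      refine lt_of_le_of_lt ?_ hi1
      exact le_ciSup (f := fun k : Fin (N i) => tP i (k.1 + 1) - tP i k.1)
        (Set.finite_range _).bddAbove ⟨k, hk⟩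
    have hd1 := aux_pc (N i) (tP i) (htP0 i) (htPmono i) (d i) (hdpc i)
    have hd2 := aux_pc (N i) (tP i) (htP0 i) (htPmono i) (fun s => ‖d i s‖ ^ 2) (by
      intro k hk
      obtain ⟨b, hb⟩ := hdpc i k hk
      exact ⟨‖b‖ ^ 2, fun s hs => by simp only [hb s hs]⟩)
    have hle : ∀ k ≤ N i, tP i k ≤ tf := by
      intro k hk
      rw [← htPN i]
      induction hk using Nat.decreasingInduction with
      | self => exact le_rfl
      | of_succ k hk ih => exact (htPmono i k hk).le.trans ih
    have hdI := (hd1 (N i) le_rfl).2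
    have hdI2 := (hd2 (N i) le_rfl).2
    rw [htPN, ← integrableOn_Icc_iff_integrableOn_Ico,
      integrableOn_Icc_iff_integrableOn_Ioc] at hdI hdI2
    have hx := aux_x tf htf (d i) x' hdI hdI2 (hInt.mono_set Ioc_subset_Icc_self)
      (hL2.mono_set Ioc_subset_Icc_self) (xt i) x (hxtAC i) hAC B hB (by linarith)
    have hLB : L * (B * (tf + 2)) = η / 3 := by
      rw [hBdef]; field_simp
    have hloc : ∀ k < N i, ∀ s ∈ Ioc (tP i k) (tP i (k + 1)),
        ‖zt i s - z s‖ ≤ ‖zt i (tP i k) - z (tP i k)‖ +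
          (η + L * ‖zt i (tP i k) - z (tP i k)‖) * (s - tP i k) := by
      intro k hk s hs
      have hk0 := (hd1 k hk.le).1
      have hk1 := hle (k + 1) hk
      have hkI : tP i k ∈ Icc (0:ℝ) tf := ⟨hk0, hle k hk.le⟩
      have hst := aux_step tf (fun r => h r (x r) (z r) θ) z z0 hgc hz (tP i k) s
        (η + L * ‖zt i (tP i k) - z (tP i k)‖) hk0 hs.1.le (hs.2.trans hk1)
        (h (tP i k) (xt i (tP i k)) (zt i (tP i k)) (ϑ i)) (by
          intro r hr
          have hrI : r ∈ Icc (0:ℝ) tf := ⟨hk0.trans hr.1.le, hr.2.trans (hs.2.trans hk1)⟩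
          have a1 := hgδ r hrI (tP i k) hkI (by
            rw [Real.dist_eq, abs_of_nonneg (by linarith [hr.1])]
            linarith [hr.2, hs.2, hstep k hk])
          rw [dist_eq_norm] at a1
          have a2 := hhLip θ hθS (tP i k) hkI (x (tP i k)) (xt i (tP i k))
            (z (tP i k)) (zt i (tP i k))
          rw [norm_sub_rev (x _), norm_sub_rev (z _)] at a2
          have a3 := hhu ε hεpos (tP i k) hkI (tP i k) hkI (xt i (tP i k)) (xt i (tP i k))
            (zt i (tP i k)) (zt i (tP i k)) θ (ϑ i) hθS hϑS (by simpa using hεpos.le)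
            (by simpa using hεpos.le) (by simpa using hεpos.le)
            (by rw [norm_sub_rev]; linarith)
          have a4 := mul_le_mul_of_nonneg_left (hx (tP i k) hkI) hL.le
          rw [hLB] at a4
          rw [← hLdef, mul_add] at a2
          have a5 := norm_sub_le_norm_sub_add_norm_sub (h r (x r) (z r) θ)
            (h (tP i k) (x (tP i k)) (z (tP i k)) θ)
            (h (tP i k) (xt i (tP i k)) (zt i (tP i k)) (ϑ i))
          have a6 := norm_sub_le_norm_sub_add_norm_sub
            (h (tP i k) (x (tP i k)) (z (tP i k)) θ)
            (h (tP i k) (xt i (tP i k)) (zt i (tP i k)) θ)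
            (h (tP i k) (xt i (tP i k)) (zt i (tP i k)) (ϑ i))
          linarith)
      have e1 : zt i s - z s = (zt i (tP i k) - z (tP i k)) - (z s - z (tP i k) -
          (s - tP i k) • h (tP i k) (xt i (tP i k)) (zt i (tP i k)) (ϑ i)) := by
        rw [hztrec i k hk s hs]; abel
      rw [e1]
      exact (norm_sub_le _ _).trans (by linarith)
    have hE0 : ‖zt i 0 - z 0‖ ≤ η := by
      rw [hzt0, hz 0 ⟨le_rfl, htf.le⟩]
      simp only [Ioc_self, setIntegral_empty, add_zero]
      linarith
    have hind : ∀ k ≤ N i, ∀ s ∈ Icc 0 (tP i k),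
        ‖zt i s - z s‖ ≤ (η + η * s) * Real.exp (L * s) := by
      intro k
      induction k with
      | zero =>
        intro _ s hs
        rw [htP0, Icc_self] at hs
        rw [mem_singleton_iff.1 hs]
        simpa using hE0
      | succ k ih =>
        intro hk s hs
        rcases le_or_gt s (tP i k) with hsk | hsk
        · exact ih (by omega) s ⟨hs.1, hsk⟩
        · have hk0 := (hd1 k (by omega)).1
          have b1 := hloc k hk s ⟨hsk, hs.2⟩
          have b2 := ih (by omega) (tP i k) ⟨hk0, le_rfl⟩
          set a := tP i k
          set E := ‖zt i a - z a‖
          have hΔ : 0 ≤ s - a := by linarith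
          have b3 : 1 + L * (s - a) ≤ Real.exp (L * (s - a)) := by
            linarith [Real.add_one_le_exp (L * (s - a))]
          have b4 : Real.exp (L * s) = Real.exp (L * a) * Real.exp (L * (s - a)) := by
            rw [← Real.exp_add]; ring_nf
          have b5 : 1 ≤ Real.exp (L * s) := Real.one_le_exp (by positivity [hs.1])
          calc ‖zt i s - z s‖ ≤ E * (1 + L * (s - a)) + η * (s - a) := by linarith
            _ ≤ ((η + η * a) * Real.exp (L * a)) * Real.exp (L * (s - a))
                + η * (s - a) * Real.exp (L * s) := by
              apply add_le_add
              · apply mul_le_mul b2 b3 (by positivity) (by positivity)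
              · exact le_mul_of_one_le_right (by positivity) b5
            _ = (η + η * s) * Real.exp (L * s) := by rw [b4]; ring
    intro t ht
    refine (hind (N i) le_rfl t (by rwa [htPN])).trans ?_
    have ht0 := ht.1
    have ht1 := ht.2
    gcongr
  have : Nonempty (Icc (0:ℝ) tf) := ⟨⟨0, le_rfl, htf.le⟩⟩
  rw [Metric.tendsto_atTop']
  intro ε hε
  have hC : 0 < (1 + tf) * Real.exp (L * tf) := by positivity
  obtain ⟨M, hM⟩ := eventually_atTop.1
    (key (ε / 2 / ((1 + tf) * Real.exp (L * tf))) (by positivity))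
  refine ⟨M, fun i hi => ?_⟩
  have h0 : 0 ≤ ⨆ t : Icc (0:ℝ) tf, ‖zt i t.1 - z t.1‖ := Real.iSup_nonneg fun _ => norm_nonneg _
  rw [Real.dist_eq, sub_zero, abs_of_nonneg h0]
  refine lt_of_le_of_lt (ciSup_le fun t => hM i hi.le t.1 t.2) ?_
  have : (ε / 2 / ((1 + tf) * Real.exp (L * tf)) +
      ε / 2 / ((1 + tf) * Real.exp (L * tf)) * tf) * Real.exp (L * tf) = ε / 2 := by
    field_simp
  rw [this]
  linarith
end

section
/- Let (x̃_i, ζ_i, ϑ_i) be a sequence with x̃_i ∈ PL(𝒫_i, ℝⁿ), ζ_i ∈ ℝ^q and ϑ_i ∈ S such that lim_{i→∞} (‖x̃_i − x‖_{W²} + |ζ_i − z₀| + |ϑ_i − θ|) = 0 for some x ∈ W²_n, z₀ ∈ ℝ^q and θ ∈ S. Then lim_{i→∞} ℓ̃_i(x̃_i, ζ_i, ϑ_i) = ℓ_e(x, z₀, θ) in ℝ̄. -/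
open MeasureTheory Filter Set

/-- `ln` with values in `ℝ̄ = EReal` and `ln 0 := −∞`. -/
noncomputable def elog (r : ℝ) : EReal := if r ≤ 0 then ⊥ else ((Real.log r : ℝ) : EReal)

lemma aux_elog {a : ℕ → ℝ} {r : ℝ} (ha : ∀ i, 0 ≤ a i) (hr : 0 ≤ r)
    (h : Tendsto a atTop (nhds r)) :
    Tendsto (fun i => elog (a i)) atTop (nhds (elog r)) := by
  rcases hr.eq_or_lt with h0 | h0
  · subst h0
    have : elog 0 = ⊥ := by simp [elog]
    rw [this, EReal.tendsto_nhds_bot_iff_real]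
    intro y
    have h1 : ∀ᶠ i in atTop, a i < Real.exp y := h.eventually_lt_const (Real.exp_pos y)
    filter_upwards [h1] with i hi
    unfold elog
    split_ifs with hc
    · exact EReal.bot_lt_coe y
    · push Not at hc
      rw [EReal.coe_lt_coe_iff]
      exact (Real.log_lt_iff_lt_exp hc).2 hi
  · have e : elog r = ((Real.log r : ℝ) : EReal) := by simp [elog, not_le.2 h0]
    rw [e]
    have h1 : Tendsto (fun i => ((Real.log (a i) : ℝ) : EReal)) atTop (nhds ((Real.log r : ℝ) : EReal)) :=
      (continuous_coe_real_ereal.tendsto _).comp (h.log h0.ne')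
    refine h1.congr' ?_
    filter_upwards [h.eventually_const_lt h0] with i hi
    simp [elog, not_le.2 hi]

lemma aux_elog_ne_top (r : ℝ) : elog r ≠ ⊤ := by
  unfold elog; split_ifs <;> simp

lemma aux_final {a b c : ℕ → ℝ} {A B C : ℝ} (ha : ∀ i, 0 ≤ a i) (hb : ∀ i, 0 ≤ b i)
    (hA : 0 ≤ A) (hB : 0 ≤ B)
    (h1 : Tendsto a atTop (nhds A)) (h2 : Tendsto b atTop (nhds B))
    (h3 : Tendsto c atTop (nhds C)) :
    Tendsto (fun i => elog (a i) + elog (b i) - ((c i : ℝ) : EReal)) atTop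
      (nhds (elog A + elog B - ((C : ℝ) : EReal))) := by
  have e1 := aux_elog ha hA h1
  have e2 := aux_elog hb hB h2
  have e3 : Tendsto (fun i => ((-(c i) : ℝ) : EReal)) atTop (nhds ((-C : ℝ) : EReal)) :=
    (continuous_coe_real_ereal.tendsto _).comp h3.neg
  have e12 : Tendsto (fun i => elog (a i) + elog (b i)) atTop (nhds (elog A + elog B)) :=
    (EReal.continuousAt_add (p := (elog A, elog B)) (Or.inl (aux_elog_ne_top _))
      (Or.inr (aux_elog_ne_top _))).tendsto.comp (e1.prodMk_nhds e2)
  have e4 : Tendsto (fun i => (elog (a i) + elog (b i)) + ((-(c i) : ℝ) : EReal)) atTop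
      (nhds ((elog A + elog B) + ((-C : ℝ) : EReal))) :=
    (EReal.continuousAt_add (p := (elog A + elog B, ((-C : ℝ) : EReal))) (Or.inr (by simp))
      (Or.inr (by simp))).tendsto.comp (e12.prodMk_nhds e3)
  simpa [sub_eq_add_neg] using e4

lemma aux_cs {E : Type*} [NormedAddCommGroup E] {T : ℝ} (hT : 0 < T) {g : ℝ → E}
    (h1 : IntegrableOn (fun s => ‖g s‖) (Ioc 0 T))
    (h2 : IntegrableOn (fun s => ‖g s‖ ^ 2) (Ioc 0 T)) :
    ∫ s in Ioc 0 T, ‖g s‖ ≤ Real.sqrt (T * ∫ s in Ioc 0 T, ‖g s‖ ^ 2) := by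
  apply Real.le_sqrt_of_sq_le
  set I := ∫ s in Ioc 0 T, ‖g s‖ with hI
  have hc : ∀ c : ℝ, IntegrableOn (fun _ : ℝ => c) (Ioc 0 T) := fun c =>
    integrableOn_const (by simp)
  have h3 : 0 ≤ ∫ s in Ioc 0 T, (‖g s‖ ^ 2 - (2 * (I / T)) * ‖g s‖ + (I / T) ^ 2) := by
    apply integral_nonneg
    intro s
    have := sq_nonneg (‖g s‖ - I / T)
    simp only [Pi.zero_apply]
    nlinarith
  have h2' : IntegrableOn (fun s => ‖g s‖ ^ 2 - (2 * (I / T)) * ‖g s‖) (Ioc 0 T) :=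
    h2.sub (h1.const_mul _)
  rw [integral_add h2' (hc _), integral_sub h2 (h1.const_mul _),
    integral_const_mul, ← hI] at h3
  simp [hT.le] at h3
  have e : T * (I / T) ^ 2 = I / T * I := by field_simp
  rw [e] at h3
  have h4 : I / T * I ≤ ∫ s in Ioc 0 T, ‖g s‖ ^ 2 := by linarith
  have h5 := mul_le_mul_of_nonneg_left h4 hT.le
  have e2 : T * (I / T * I) = I ^ 2 := by field_simp
  linarith

lemma aux_L2 {E : Type*} [NormedAddCommGroup E] {μ : Measure ℝ} {u : ℝ → E} {v : ℕ → ℝ → E}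
    (hu : MemLp u 2 μ) (hv : ∀ i, MemLp (v i) 2 μ)
    (h : Tendsto (fun i => ∫ s, ‖v i s - u s‖ ^ 2 ∂μ) atTop (nhds 0)) :
    Tendsto (fun i => ∫ s, ‖v i s‖ ^ 2 ∂μ) atTop (nhds (∫ s, ‖u s‖ ^ 2 ∂μ)) := by
  have Iu := (memLp_two_iff_integrable_sq_norm hu.1).1 hu
  have Iv := fun i => (memLp_two_iff_integrable_sq_norm (hv i).1).1 (hv i)
  have Id : ∀ i, Integrable (fun s => ‖v i s - u s‖ ^ 2) μ := fun i =>
    (memLp_two_iff_integrable_sq_norm ((hv i).sub hu).1).1 ((hv i).sub hu)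
  set U := ∫ s, ‖u s‖ ^ 2 ∂μ with hU
  have hU0 : 0 ≤ U := integral_nonneg fun s => by positivity
  have key : ∀ i, ∀ c > 0, |∫ s, ‖v i s‖ ^ 2 ∂μ - U| ≤
      (1 + 1 / c) * ∫ s, ‖v i s - u s‖ ^ 2 ∂μ + c * U := by
    intro i c hc
    rw [hU, ← integral_sub (Iv i) Iu, ← integral_const_mul, ← integral_const_mul,
      ← integral_add ((Id i).const_mul _) (Iu.const_mul _)]
    rw [← Real.norm_eq_abs]
    refine norm_integral_le_of_norm_le (((Id i).const_mul _).add (Iu.const_mul _)) ?_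
    refine Filter.Eventually.of_forall fun s => ?_
    rw [Real.norm_eq_abs]
    have a1 := abs_norm_sub_norm_le (v i s) (u s)
    set p := ‖v i s‖
    set r := ‖u s‖
    set w := ‖v i s - u s‖
    have hp : 0 ≤ p := norm_nonneg _
    have hr : 0 ≤ r := norm_nonneg _
    have hw : 0 ≤ w := norm_nonneg _
    have a2 : |p ^ 2 - r ^ 2| ≤ w * (w + 2 * r) := by
      have : p ^ 2 - r ^ 2 = (p - r) * (p + r) := by ring
      rw [this, abs_mul, abs_of_nonneg (add_nonneg hp hr)]
      have : p ≤ w + r := by linarith [(abs_le.1 a1).2]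
      exact mul_le_mul a1 (by linarith) (by positivity) hw
    have a3 : 2 * w * r ≤ 1 / c * w ^ 2 + c * r ^ 2 := by
      have : 0 ≤ (1 / c) * (w - c * r) ^ 2 := by positivity
      have e : (1 / c) * (w - c * r) ^ 2 = 1 / c * w ^ 2 - 2 * w * r + c * r ^ 2 := by
        field_simp; ring
      linarith
    nlinarith
  rw [Metric.tendsto_atTop'] 
  intro ε hε
  set c := ε / (2 * (U + 1)) with hc
  have hcpos : 0 < c := by positivity
  have hcU : c * U < ε / 2 + 0 := by
    have : c * (U + 1) = ε / 2 := by rw [hc]; field_simp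
    nlinarith
  have h2 : Tendsto (fun i => (1 + 1 / c) * ∫ s, ‖v i s - u s‖ ^ 2 ∂μ) atTop (nhds 0) := by
    simpa using h.const_mul (1 + 1 / c)
  obtain ⟨M, hM⟩ := (eventually_atTop.1 (h2.eventually_lt_const (half_pos hε)))
  refine ⟨M, fun i hi => ?_⟩
  rw [Real.dist_eq]
  linarith [key i c hcpos, hM i hi.le]

section part
variable {N : ℕ} {t : ℕ → ℝ} (hm : ∀ k < N, t k < t (k + 1))
include hm

lemma aux_mono {j k : ℕ} (hjk : j ≤ k) (hk : k ≤ N) : t j ≤ t k := by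
  induction k, hjk using Nat.le_induction with
  | base => exact le_rfl
  | succ k hjk ih => exact (ih (by omega)).trans (hm k (by omega)).le

lemma aux_find (M : ℕ) (hM : M ≤ N) {s : ℝ} (hs : s ∈ Ico (t 0) (t M)) :
    ∃ k < M, s ∈ Ico (t k) (t (k + 1)) := by
  induction M with
  | zero => simp at hs
  | succ M ih =>
    by_cases h : s < t M
    · obtain ⟨k, hk, hk'⟩ := ih (by omega) ⟨hs.1, h⟩
      exact ⟨k, by omega, hk'⟩
    · exact ⟨M, by omega, not_lt.1 h, hs.2⟩

lemma aux_kappa : ∃ κ : ℝ → ℕ, ∀ k < N, ∀ s ∈ Ico (t k) (t (k + 1)), κ s = k := by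
  classical
  refine ⟨fun s => if h : ∃ k, k < N ∧ s ∈ Ico (t k) (t (k + 1)) then h.choose else 0, ?_⟩
  intro k hk s hs
  have h : ∃ k, k < N ∧ s ∈ Ico (t k) (t (k + 1)) := ⟨k, hk, hs⟩
  simp only [h, dif_pos]
  obtain ⟨h1, h2⟩ := h.choose_spec
  generalize h.choose = j at *
  rcases lt_trichotomy j k with h' | h' | h'
  · have := aux_mono hm (show j + 1 ≤ k by omega) hk.le
    linarith [h2.2, hs.1]
  · exact h'
  · have := aux_mono hm (show k + 1 ≤ j by omega) h1.le
    linarith [h2.1, hs.2]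

lemma aux_step_s7 {E : Type*} [NormedAddCommGroup E] [NormedSpace ℝ E] [CompleteSpace E]
    {g : ℝ → E} {b : ℕ → E}
    (hb : ∀ k < N, ∀ s ∈ Ico (t k) (t (k + 1)), g s = b k) (M : ℕ) (hM : M ≤ N) :
    IntegrableOn g (Ioc (t 0) (t M)) ∧
      ∫ s in Ioc (t 0) (t M), g s = ∑ k ∈ Finset.range M, (t (k + 1) - t k) • b k := by
  rw [integral_Ioc_eq_integral_Ioo, ← integral_Ico_eq_integral_Ioo,
    integrableOn_Ioc_iff_integrableOn_Ioo, ← integrableOn_Ico_iff_integrableOn_Ioo]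
  induction M with
  | zero => simp
  | succ M ih =>
    obtain ⟨i1, i2⟩ := ih (by omega)
    have hl := (hm M (by omega)).le
    have hb' := hb M (by omega)
    have i3 : IntegrableOn g (Ico (t M) (t (M + 1))) := by
      refine IntegrableOn.congr_fun (f := fun _ => b M) (integrableOn_const (by simp)) ?_ measurableSet_Ico
      intro s hs; exact (hb' s hs).symm
    have i4 : ∫ s in Ico (t M) (t (M + 1)), g s = (t (M + 1) - t M) • b M := by
      rw [setIntegral_congr_fun (g := fun _ => b M) measurableSet_Ico hb']
      simp [hl]
    have hU : Ico (t 0) (t M) ∪ Ico (t M) (t (M + 1)) = Ico (t 0) (t (M + 1)) :=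
      Ico_union_Ico_eq_Ico (aux_mono hm (Nat.zero_le M) (by omega)) hl
    rw [← hU]
    refine ⟨i1.union i3, ?_⟩
    rw [setIntegral_union _ measurableSet_Ico i1 i3, i2, i4, Finset.sum_range_succ]
    rw [Set.disjoint_left]
    intro s h1 h2
    exact absurd h1.2 (not_lt.2 h2.1)

lemma aux_cont {E : Type*} [NormedAddCommGroup E] {g : ℝ → E}
    (hg : ∀ k < N, ContinuousOn g (Icc (t k) (t (k + 1)))) (M : ℕ) (hM : M ≤ N) :
    ContinuousOn g (Icc (t 0) (t M)) := by
  induction M with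
  | zero => simp
  | succ M ih =>
    rw [← Icc_union_Icc_eq_Icc (aux_mono hm (Nat.zero_le M) (by omega)) (hm M (by omega)).le]
    exact (ih (by omega)).union_of_isClosed (hg M (by omega)) isClosed_Icc isClosed_Icc

/-- discrete Gronwall -/
lemma aux_gron {e : ℝ → ℝ} {L ρ A : ℝ} (hL : 0 < L) (hρ : 0 ≤ ρ) (h0 : t 0 = 0)
    (he0 : ∀ s, 0 ≤ e s) (hA : e 0 + ρ / L ≤ A)
    (he : ∀ k < N, ∀ s ∈ Icc (t k) (t (k + 1)), e s ≤ e (t k) + (s - t k) * (ρ + L * e (t k))) :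
    ∀ s ∈ Icc 0 (t N), e s ≤ Real.exp (L * t N) * A := by
  have hA0 : 0 ≤ A := by have := he0 0; have : 0 ≤ ρ / L := by positivity
                         linarith
  have step : ∀ k < N, e (t k) + ρ / L ≤ Real.exp (L * t k) * A →
      ∀ s ∈ Icc (t k) (t (k + 1)), e s + ρ / L ≤ Real.exp (L * s) * A := by
    intro k hk hyp s hs
    have h1 := he k hk s hs
    have e1 : e (t k) + (s - t k) * (ρ + L * e (t k)) + ρ / L
        = (e (t k) + ρ / L) * (1 + L * (s - t k)) := by field_simp; ring
    have h2 : 1 + L * (s - t k) ≤ Real.exp (L * (s - t k)) := by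
      linarith [Real.add_one_le_exp (L * (s - t k))]
    have h3 : 0 ≤ 1 + L * (s - t k) := by nlinarith [hs.1]
    calc e s + ρ / L ≤ (e (t k) + ρ / L) * (1 + L * (s - t k)) := by linarith
      _ ≤ (Real.exp (L * t k) * A) * Real.exp (L * (s - t k)) := by gcongr
      _ = Real.exp (L * s) * A := by
        rw [mul_right_comm, ← Real.exp_add]; ring_nf
  have main : ∀ k ≤ N, e (t k) + ρ / L ≤ Real.exp (L * t k) * A := by
    intro k
    induction k with
    | zero => intro _; simpa [h0] using hA
    | succ k ih =>
      intro hk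
      exact step k (by omega) (ih (by omega)) _ ⟨(hm k (by omega)).le, le_rfl⟩
  have hρL : 0 ≤ ρ / L := by positivity
  intro s hs
  rcases hs.2.eq_or_lt with h | h
  · rw [h]; linarith [main N le_rfl]
  · obtain ⟨k, hk, hk'⟩ := aux_find hm N le_rfl (s := s) ⟨by rw [h0]; exact hs.1, h⟩
    have := step k hk (main k hk.le) s ⟨hk'.1, hk'.2.le⟩
    have h2 : Real.exp (L * s) * A ≤ Real.exp (L * t N) * A := by gcongr
    linarith

end part

/-- continuous convergence of the Euler-discretized log-posteriors:
if `(x̃_i, ζ_i, ϑ_i) → (x, z₀, θ)` in `W²_n × ℝ^q × ℝ^m` with `ϑ_i ∈ S` and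
`x̃_i ∈ PL(𝒫_i)`, then `ℓ̃_i(x̃_i, ζ_i, ϑ_i) → ℓ_e(x, z₀, θ)` in `ℝ̄`.
Piecewise linear paths are encoded by their piecewise constant derivatives `d i`,
`W²` functions by function–derivative pairs, and `z̃_i`, `z` are the Euler-discretized
clean-state paths resp. the solution of the clean-state ODE. -/
theorem stmt7 {n q m : ℕ} (tf : ℝ) (htf : 0 < tf)
    -- nested partitions with vanishing mesh
    (N : ℕ → ℕ) (hN1 : ∀ i, 1 ≤ N i) (tP : ℕ → ℕ → ℝ)
    (htP0 : ∀ i, tP i 0 = 0) (htPN : ∀ i, tP i (N i) = tf)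
    (htPmono : ∀ i, ∀ k < N i, tP i k < tP i (k + 1))
    (hnested : ∀ i, ∀ k ≤ N i, ∃ k' ≤ N (i + 1), tP (i + 1) k' = tP i k)
    (hmesh : Tendsto (fun i => ⨆ k : Fin (N i), (tP i (k.1 + 1) - tP i k.1))
      atTop (nhds 0))
    -- closed parameter set
    (S : Set (EuclideanSpace ℝ (Fin m))) (hS : IsClosed S)
    -- dynamics and their regularity
    (f : ℝ → EuclideanSpace ℝ (Fin n) → EuclideanSpace ℝ (Fin q) →
      EuclideanSpace ℝ (Fin m) → EuclideanSpace ℝ (Fin n))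
    (h : ℝ → EuclideanSpace ℝ (Fin n) → EuclideanSpace ℝ (Fin q) →
      EuclideanSpace ℝ (Fin m) → EuclideanSpace ℝ (Fin q))
    (hfc : Continuous fun p : ℝ × EuclideanSpace ℝ (Fin n) × EuclideanSpace ℝ (Fin q) ×
      EuclideanSpace ℝ (Fin m) => f p.1 p.2.1 p.2.2.1 p.2.2.2)
    (hhc : Continuous fun p : ℝ × EuclideanSpace ℝ (Fin n) × EuclideanSpace ℝ (Fin q) ×
      EuclideanSpace ℝ (Fin m) => h p.1 p.2.1 p.2.2.1 p.2.2.2)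
    (ρf ρh : ℝ → ℝ)
    (hρ : Tendsto (fun ε => ρf ε + ρh ε) (nhdsWithin 0 (Ioi 0)) (nhds 0))
    (hfu : ∀ ε > (0:ℝ), ∀ t ∈ Icc (0:ℝ) tf, ∀ t' ∈ Icc (0:ℝ) tf,
      ∀ (a a' : EuclideanSpace ℝ (Fin n)) (b b' : EuclideanSpace ℝ (Fin q))
        (c c' : EuclideanSpace ℝ (Fin m)), c ∈ S → c' ∈ S →
      |t - t'| ≤ ε → ‖a - a'‖ ≤ ε → ‖b - b'‖ ≤ ε → ‖c - c'‖ ≤ ε →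
      ‖f t a b c - f t' a' b' c'‖ ≤ ρf ε)
    (hhu : ∀ ε > (0:ℝ), ∀ t ∈ Icc (0:ℝ) tf, ∀ t' ∈ Icc (0:ℝ) tf,
      ∀ (a a' : EuclideanSpace ℝ (Fin n)) (b b' : EuclideanSpace ℝ (Fin q))
        (c c' : EuclideanSpace ℝ (Fin m)), c ∈ S → c' ∈ S →
      |t - t'| ≤ ε → ‖a - a'‖ ≤ ε → ‖b - b'‖ ≤ ε → ‖c - c'‖ ≤ ε →
      ‖h t a b c - h t' a' b' c'‖ ≤ ρh ε)
    (Lf Lh : EuclideanSpace ℝ (Fin m) → ℝ)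
    (hLf : ∀ θ ∈ S, 0 < Lf θ) (hLh : ∀ θ ∈ S, 0 < Lh θ)
    (hfLip : ∀ θ ∈ S, ∀ t ∈ Icc (0:ℝ) tf,
      ∀ (a a' : EuclideanSpace ℝ (Fin n)) (b b' : EuclideanSpace ℝ (Fin q)),
      ‖f t a b θ - f t a' b' θ‖ ≤ Lf θ * (‖a - a'‖ + ‖b - b'‖))
    (hhLip : ∀ θ ∈ S, ∀ t ∈ Icc (0:ℝ) tf,
      ∀ (a a' : EuclideanSpace ℝ (Fin n)) (b b' : EuclideanSpace ℝ (Fin q)),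
      ‖h t a b θ - h t a' b' θ‖ ≤ Lh θ * (‖a - a'‖ + ‖b - b'‖))
    -- measurement likelihood: nonnegative, continuous w.r.t. the supremum norms
    (ψ : (ℝ → EuclideanSpace ℝ (Fin n)) → (ℝ → EuclideanSpace ℝ (Fin q)) →
      EuclideanSpace ℝ (Fin m) → ℝ)
    (hψ0 : ∀ a b c, 0 ≤ ψ a b c)
    (hψc : ∀ (a : ℝ → EuclideanSpace ℝ (Fin n)) (b : ℝ → EuclideanSpace ℝ (Fin q))
      (c : EuclideanSpace ℝ (Fin m)), ContinuousOn a (Icc 0 tf) →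
      ContinuousOn b (Icc 0 tf) → ∀ ε > (0:ℝ), ∃ δ > (0:ℝ),
      ∀ (a' : ℝ → EuclideanSpace ℝ (Fin n)) (b' : ℝ → EuclideanSpace ℝ (Fin q))
        (c' : EuclideanSpace ℝ (Fin m)), ContinuousOn a' (Icc 0 tf) →
        ContinuousOn b' (Icc 0 tf) →
        (∀ t ∈ Icc (0:ℝ) tf, ‖a' t - a t‖ ≤ δ) →
        (∀ t ∈ Icc (0:ℝ) tf, ‖b' t - b t‖ ≤ δ) → ‖c' - c‖ ≤ δ →
        |ψ a' b' c' - ψ a b c| ≤ ε)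
    -- prior: nonnegative, continuous, vanishing outside `int S`
    (pr : EuclideanSpace ℝ (Fin n) → EuclideanSpace ℝ (Fin q) →
      EuclideanSpace ℝ (Fin m) → ℝ)
    (hpr0 : ∀ a b c, 0 ≤ pr a b c)
    (hprc : Continuous fun p : EuclideanSpace ℝ (Fin n) × EuclideanSpace ℝ (Fin q) ×
      EuclideanSpace ℝ (Fin m) => pr p.1 p.2.1 p.2.2)
    (hprv : ∀ a b c, c ∉ interior S → pr a b c = 0)
    -- invertible diffusion matrix
    (G : EuclideanSpace ℝ (Fin n) ≃L[ℝ] EuclideanSpace ℝ (Fin n))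
    -- the limit point `(x, z₀, θ)` with `θ ∈ S`
    (x x' : ℝ → EuclideanSpace ℝ (Fin n))
    (hInt : IntegrableOn x' (Icc 0 tf))
    (hL2 : IntegrableOn (fun t => ‖x' t‖ ^ 2) (Icc 0 tf))
    (hAC : ∀ t ∈ Icc (0:ℝ) tf, x t = x 0 + ∫ s in Ioc (0:ℝ) t, x' s)
    (z0 : EuclideanSpace ℝ (Fin q))
    (θ : EuclideanSpace ℝ (Fin m)) (hθS : θ ∈ S)
    -- the solution of the clean-state ODE at the limit point
    (z : ℝ → EuclideanSpace ℝ (Fin q)) (hzc : ContinuousOn z (Icc 0 tf))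
    (hz : ∀ t ∈ Icc (0:ℝ) tf, z t = z0 + ∫ s in Ioc (0:ℝ) t, h s (x s) (z s) θ)
    -- the approximating sequence, `x̃_i ∈ PL(𝒫_i)` with derivative `d i`, `ϑ_i ∈ S`
    (xt d : ℕ → ℝ → EuclideanSpace ℝ (Fin n))
    (hdpc : ∀ i, ∀ k < N i, ∃ b : EuclideanSpace ℝ (Fin n),
      ∀ s ∈ Ico (tP i k) (tP i (k + 1)), d i s = b)
    (hxtAC : ∀ i, ∀ s ∈ Icc (0:ℝ) tf, xt i s = xt i 0 + ∫ u in Ioc (0:ℝ) s, d i u)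
    (ζ : ℕ → EuclideanSpace ℝ (Fin q)) (ϑ : ℕ → EuclideanSpace ℝ (Fin m))
    (hϑS : ∀ i, ϑ i ∈ S)
    (hconv : Tendsto (fun i =>
      Real.sqrt (‖xt i 0 - x 0‖ ^ 2 + ∫ s in Ioc (0:ℝ) tf, ‖d i s - x' s‖ ^ 2)
      + ‖ζ i - z0‖ + ‖ϑ i - θ‖) atTop (nhds 0))
    -- the associated Euler-discretized clean-state paths
    (zt : ℕ → ℝ → EuclideanSpace ℝ (Fin q))
    (hzt0 : ∀ i, zt i 0 = ζ i)
    (hztrec : ∀ i, ∀ k < N i, ∀ s ∈ Ioc (tP i k) (tP i (k + 1)),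
      zt i s = zt i (tP i k) +
        (s - tP i k) • h (tP i k) (xt i (tP i k)) (zt i (tP i k)) (ϑ i)) :
    Tendsto (fun i =>
      elog (ψ (xt i) (zt i) (ϑ i)) + elog (pr (xt i 0) (ζ i) (ϑ i))
        - ((((1:ℝ) / 2) * ∑ k ∈ Finset.range (N i), (tP i (k + 1) - tP i k) *
            ‖G.symm ((tP i (k + 1) - tP i k)⁻¹ • (xt i (tP i (k + 1)) - xt i (tP i k))
              - f (tP i k) (xt i (tP i k)) (zt i (tP i k)) (ϑ i))‖ ^ 2 : ℝ) : EReal))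
      atTop
      (nhds (elog (ψ x z θ) + elog (pr (x 0) z0 θ)
        - ((((1:ℝ) / 2) * ∫ t in Ioc (0:ℝ) tf,
            ‖G.symm (x' t - f t (x t) (z t) θ)‖ ^ 2 : ℝ) : EReal))) := by
  -- basic facts on the partitions
  have tmem : ∀ i, ∀ k ≤ N i, tP i k ∈ Icc (0:ℝ) tf := fun i k hk =>
    ⟨by rw [← htP0 i]; exact aux_mono (htPmono i) (Nat.zero_le k) hk,
     by rw [← htPN i]; exact aux_mono (htPmono i) hk le_rfl⟩
  have smem : ∀ i, ∀ k < N i, ∀ s ∈ Icc (tP i k) (tP i (k + 1)), s ∈ Icc (0:ℝ) tf :=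
    fun i k hk s hs => ⟨(tmem i k hk.le).1.trans hs.1, hs.2.trans (tmem i (k+1) hk).2⟩
  have mesh : ∀ ε > (0:ℝ), ∀ᶠ i in atTop, ∀ k < N i, tP i (k + 1) - tP i k < ε := by
    intro ε hε
    filter_upwards [hmesh.eventually_lt_const hε] with i hi k hk
    exact lt_of_le_of_lt
      (le_ciSup (f := fun k : Fin (N i) => (tP i (k.1 + 1) - tP i k.1))
        (Set.finite_range _).bddAbove ⟨k, hk⟩) hi
  -- convergence of the pieces
  set e : ℕ → ℝ := fun i => ∫ s in Ioc (0:ℝ) tf, ‖d i s - x' s‖ ^ 2 with he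
  have e0 : ∀ i, 0 ≤ e i := fun i => integral_nonneg fun s => by positivity
  have csq : Tendsto (fun i => Real.sqrt (‖xt i 0 - x 0‖ ^ 2 + e i)) atTop (nhds 0) := by
    refine squeeze_zero (fun i => Real.sqrt_nonneg _) (fun i => ?_) hconv
    have := norm_nonneg (ζ i - z0)
    have := norm_nonneg (ϑ i - θ)
    simp only [he]
    linarith
  have cζ : Tendsto (fun i => ‖ζ i - z0‖) atTop (nhds 0) := by
    refine squeeze_zero (fun i => norm_nonneg _) (fun i => ?_) hconv
    have := Real.sqrt_nonneg (‖xt i 0 - x 0‖ ^ 2 + e i)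
    have := norm_nonneg (ϑ i - θ)
    simp only [he] at *
    linarith
  have cϑ : Tendsto (fun i => ‖ϑ i - θ‖) atTop (nhds 0) := by
    refine squeeze_zero (fun i => norm_nonneg _) (fun i => ?_) hconv
    have := Real.sqrt_nonneg (‖xt i 0 - x 0‖ ^ 2 + e i)
    have := norm_nonneg (ζ i - z0)
    simp only [he] at *
    linarith
  have cx0 : Tendsto (fun i => ‖xt i 0 - x 0‖) atTop (nhds 0) := by
    refine squeeze_zero (fun i => norm_nonneg _) (fun i => ?_) csq
    apply Real.le_sqrt_of_sq_le
    linarith [e0 i]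
  have ce : Tendsto e atTop (nhds 0) := by
    have h2 := csq.pow 2
    simp only [ne_eq, OfNat.ofNat_ne_zero, not_false_eq_true, zero_pow] at h2
    refine squeeze_zero e0 (fun i => ?_) h2
    rw [Real.sq_sqrt (add_nonneg (by positivity) (e0 i))]
    have : 0 ≤ ‖xt i 0 - x 0‖ ^ 2 := by positivity
    linarith
  -- step functions
  choose! b hb using hdpc
  have dstep : ∀ i, ∀ M ≤ N i, IntegrableOn (d i) (Ioc 0 (tP i M)) ∧
      ∫ s in Ioc 0 (tP i M), d i s =
        ∑ k ∈ Finset.range M, (tP i (k + 1) - tP i k) • b i k := by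
    intro i M hM
    have := aux_step_s7 (htPmono i) (hb i) M hM
    rwa [htP0 i] at this
  have dsq : ∀ i, IntegrableOn (fun s => ‖d i s‖ ^ 2) (Ioc 0 tf) := by
    intro i
    have := (aux_step_s7 (htPmono i) (g := fun s => ‖d i s‖ ^ 2) (b := fun k => ‖b i k‖ ^ 2)
      (fun k hk s hs => by simp only [hb i k hk s hs]) (N i) le_rfl).1
    rwa [htP0 i, htPN i] at this
  have dInt : ∀ i, IntegrableOn (d i) (Ioc 0 tf) := fun i => by
    have := (dstep i (N i) le_rfl).1
    rwa [htPN i] at this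
  have x'Int : IntegrableOn x' (Ioc 0 tf) := hInt.mono_set Ioc_subset_Icc_self
  have x'L2 : MemLp x' 2 (volume.restrict (Ioc 0 tf)) :=
    (memLp_two_iff_integrable_sq_norm x'Int.1).2 (hL2.mono_set Ioc_subset_Icc_self)
  have dL2 : ∀ i, MemLp (d i) 2 (volume.restrict (Ioc 0 tf)) := fun i =>
    (memLp_two_iff_integrable_sq_norm (dInt i).1).2 (dsq i)
  have incr : ∀ i, ∀ k < N i, xt i (tP i (k + 1)) - xt i (tP i k)
      = (tP i (k + 1) - tP i k) • b i k := by
    intro i k hk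
    rw [hxtAC i _ (tmem i (k + 1) hk), hxtAC i _ (tmem i k hk.le), (dstep i (k + 1) hk).2,
      (dstep i k hk.le).2, Finset.sum_range_succ]
    abel
  -- continuity of the paths
  have ACcont : ∀ (y y' : ℝ → EuclideanSpace ℝ (Fin n)), IntegrableOn y' (Ioc 0 tf) →
      (∀ t ∈ Icc (0:ℝ) tf, y t = y 0 + ∫ s in Ioc (0:ℝ) t, y' s) →
      ContinuousOn y (Icc 0 tf) := by
    intro y y' hy1 hy2
    have : ContinuousOn (fun t => y 0 + ∫ s in Ioc (0:ℝ) t, y' s) (Icc 0 tf) :=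
      continuousOn_const.add (intervalIntegral.continuousOn_primitive
        ((integrableOn_Icc_iff_integrableOn_Ioc).2 hy1))
    exact this.congr hy2
  have xc : ContinuousOn x (Icc 0 tf) := ACcont x x' x'Int hAC
  have xtc : ∀ i, ContinuousOn (xt i) (Icc 0 tf) := fun i => ACcont _ _ (dInt i) (hxtAC i)
  have hztrec' : ∀ i, ∀ k < N i, ∀ s ∈ Icc (tP i k) (tP i (k + 1)),
      zt i s = zt i (tP i k) +
        (s - tP i k) • h (tP i k) (xt i (tP i k)) (zt i (tP i k)) (ϑ i) := by
    intro i k hk s hs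
    rcases hs.1.eq_or_lt with h1 | h1
    · rw [← h1]; simp
    · exact hztrec i k hk s ⟨h1, hs.2⟩
  have ztc : ∀ i, ContinuousOn (zt i) (Icc 0 tf) := by
    intro i
    have := aux_cont (htPmono i) (g := zt i) (fun k hk => by
      refine ContinuousOn.congr ?_ (hztrec' i k hk)
      fun_prop) (N i) le_rfl
    rwa [htP0 i, htPN i] at this
  -- uniform convergence of `xt`
  have ux : ∀ ε > (0:ℝ), ∀ᶠ i in atTop, ∀ t ∈ Icc (0:ℝ) tf, ‖xt i t - x t‖ ≤ ε := by
    intro ε hε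
    have T1 : Tendsto (fun i => ‖xt i 0 - x 0‖ + Real.sqrt (tf * e i)) atTop (nhds 0) := by
      simpa using cx0.add (ce.const_mul tf).sqrt
    filter_upwards [T1.eventually_lt_const hε] with i hi t ht
    have hsub : Ioc 0 t ⊆ Ioc 0 tf := Ioc_subset_Ioc_right ht.2
    have hD : IntegrableOn (fun s => d i s - x' s) (Ioc 0 tf) := (dInt i).sub x'Int
    have hD2 : IntegrableOn (fun s => ‖d i s - x' s‖ ^ 2) (Ioc 0 tf) :=
      (memLp_two_iff_integrable_sq_norm ((dL2 i).sub x'L2).1).1 ((dL2 i).sub x'L2)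
    have e1 : xt i t - x t = (xt i 0 - x 0) + ∫ s in Ioc 0 t, (d i s - x' s) := by
      rw [hxtAC i t ht, hAC t ht, integral_sub ((dInt i).mono_set hsub) (x'Int.mono_set hsub)]
      abel
    have e2 : ‖∫ s in Ioc 0 t, (d i s - x' s)‖ ≤ ∫ s in Ioc 0 tf, ‖d i s - x' s‖ :=
      (norm_integral_le_integral_norm _).trans
        (setIntegral_mono_set hD.norm (Eventually.of_forall fun s => norm_nonneg _)
          hsub.eventuallyLE)
    have e3 := aux_cs htf hD.norm hD2
    rw [e1]
    have := norm_add_le (xt i 0 - x 0) (∫ s in Ioc 0 t, (d i s - x' s))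
    simp only [he] at hi
    linarith
  -- uniform continuity of the limit paths
  have uc : ∀ {p : ℕ} (y : ℝ → EuclideanSpace ℝ (Fin p)), ContinuousOn y (Icc 0 tf) →
      ∀ ε > (0:ℝ), ∀ᶠ i in atTop, ∀ k < N i, ∀ s ∈ Icc (tP i k) (tP i (k + 1)),
        ‖y (tP i k) - y s‖ ≤ ε := by
    intro p y hy ε hε
    have := isCompact_Icc.uniformContinuousOn_of_continuous hy
    rw [Metric.uniformContinuousOn_iff] at this
    obtain ⟨δ, hδ, H⟩ := this ε hε
    filter_upwards [mesh δ hδ] with i hi k hk s hs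
    rw [← dist_eq_norm]
    refine (H _ (tmem i k hk.le) _ (smem i k hk s hs) ?_).le
    rw [dist_comm, Real.dist_eq, abs_of_nonneg (by linarith [hs.1])]
    linarith [hi k hk, hs.2]
  have ev : ∀ ε > (0:ℝ), ∀ᶠ i in atTop, ‖ϑ i - θ‖ ≤ ε ∧ ∀ k < N i,
      ∀ s ∈ Icc (tP i k) (tP i (k + 1)), |tP i k - s| ≤ ε ∧ ‖xt i (tP i k) - x s‖ ≤ ε ∧
        ‖z (tP i k) - z s‖ ≤ ε := by
    intro ε hε
    filter_upwards [cϑ.eventually_lt_const hε, mesh ε hε, ux (ε / 2) (by positivity),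
      uc x xc (ε / 2) (by positivity), uc z hzc ε hε] with i h1 h2 h3 h4 h5
    refine ⟨h1.le, fun k hk s hs => ⟨?_, ?_, h5 k hk s hs⟩⟩
    · rw [abs_sub_comm, abs_of_nonneg (by linarith [hs.1])]
      linarith [h2 k hk, hs.2]
    · have := norm_sub_le_norm_sub_add_norm_sub (xt i (tP i k)) (x (tP i k)) (x s)
      linarith [h3 _ (tmem i k hk.le), h4 k hk s hs]
  -- moduli
  have ρf0 : ∀ ε > (0:ℝ), 0 ≤ ρf ε := fun ε hε => by
    have := hfu ε hε 0 ⟨le_rfl, htf.le⟩ 0 ⟨le_rfl, htf.le⟩ 0 0 0 0 θ θ hθS hθS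
      (by simpa using hε.le) (by simpa using hε.le) (by simpa using hε.le) (by simpa using hε.le)
    simpa using this
  have ρh0 : ∀ ε > (0:ℝ), 0 ≤ ρh ε := fun ε hε => by
    have := hhu ε hε 0 ⟨le_rfl, htf.le⟩ 0 ⟨le_rfl, htf.le⟩ 0 0 0 0 θ θ hθS hθS
      (by simpa using hε.le) (by simpa using hε.le) (by simpa using hε.le) (by simpa using hε.le)
    simpa using this
  have ρsmall : ∀ η > (0:ℝ), ∃ ε > (0:ℝ), ρf ε ≤ η ∧ ρh ε ≤ η := by
    intro η hη
    have h1 := hρ.eventually_lt_const hη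
    obtain ⟨ε, hε1, hε2⟩ := (h1.and self_mem_nhdsWithin).exists
    have := ρf0 ε hε2
    have := ρh0 ε hε2
    exact ⟨ε, hε2, by linarith, by linarith⟩
  -- uniform convergence of `zt`
  have hcc : ContinuousOn (fun s => h s (x s) (z s) θ) (Icc 0 tf) :=
    hhc.comp_continuousOn (f := fun s => (s, x s, z s, θ))
      (continuousOn_id.prodMk (xc.prodMk (hzc.prodMk continuousOn_const)))
  have fcc : ContinuousOn (fun s => f s (x s) (z s) θ) (Icc 0 tf) :=
    hfc.comp_continuousOn (f := fun s => (s, x s, z s, θ))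
      (continuousOn_id.prodMk (xc.prodMk (hzc.prodMk continuousOn_const)))
  have hz00 : z 0 = z0 := by simpa using hz 0 ⟨le_rfl, htf.le⟩
  have L0 := hLh θ hθS
  have uz : ∀ ε > (0:ℝ), ∀ᶠ i in atTop, ∀ t ∈ Icc (0:ℝ) tf, ‖zt i t - z t‖ ≤ ε := by
    intro ε hε
    set A := ε / Real.exp (Lh θ * tf) with hA
    have hApos : 0 < A := by positivity
    obtain ⟨ε', hε', -, hρ'⟩ := ρsmall (A / 2 * Lh θ) (by positivity)
    filter_upwards [ev ε' hε', cζ.eventually_lt_const (half_pos hApos)] with i hi hζi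
    obtain ⟨hi1, hi2⟩ := hi
    have G := aux_gron (htPmono i) (e := fun s => ‖zt i s - z s‖) (A := A) L0 (ρh0 ε' hε') (htP0 i)
      (fun s => norm_nonneg _) ?_ ?_
    · rw [htPN i] at G
      intro t ht
      refine (G t ht).trans (le_of_eq ?_)
      rw [hA]; field_simp
    · simp only [hzt0 i, hz00]
      have : ρh ε' / Lh θ ≤ A / 2 := by rwa [div_le_iff₀ L0]
      linarith
    · intro k hk s hs
      set H := h (tP i k) (xt i (tP i k)) (zt i (tP i k)) (ϑ i) with hH
      have t0 := (tmem i k hk.le)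
      have s0 := smem i k hk s hs
      have II : ∀ a ∈ Icc (0:ℝ) tf, ∀ c ∈ Icc (0:ℝ) tf,
          IntervalIntegrable (fun u => h u (x u) (z u) θ) volume a c := by
        intro a ha c hc
        apply ContinuousOn.intervalIntegrable
        exact hcc.mono (uIcc_subset_Icc ha hc)
      have zz : z s - z (tP i k) = ∫ u in (tP i k)..s, h u (x u) (z u) θ := by
        rw [hz s s0, hz _ t0, ← intervalIntegral.integral_of_le s0.1,
          ← intervalIntegral.integral_of_le t0.1, add_sub_add_left_eq_sub,
          intervalIntegral.integral_interval_sub_left (II _ ⟨le_rfl, htf.le⟩ _ s0)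
          (II _ ⟨le_rfl, htf.le⟩ _ t0)]
      have e1 : zt i s - z s = (zt i (tP i k) - z (tP i k)) +
          ∫ u in (tP i k)..s, (H - h u (x u) (z u) θ) := by
        rw [intervalIntegral.integral_sub (by simp) (II _ t0 _ s0), ← zz, hztrec' i k hk s hs]
        simp
        abel
      rw [e1]
      refine (norm_add_le _ _).trans (add_le_add le_rfl ?_)
      have bd : ‖∫ u in (tP i k)..s, (H - h u (x u) (z u) θ)‖ ≤
          (ρh ε' + Lh θ * ‖zt i (tP i k) - z (tP i k)‖) * |s - tP i k| := by
        apply intervalIntegral.norm_integral_le_of_norm_le_const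
        intro u hu
        rw [uIoc_of_le hs.1] at hu
        have hu' : u ∈ Icc (tP i k) (tP i (k + 1)) := ⟨hu.1.le, hu.2.trans hs.2⟩
        have u0 := smem i k hk u hu'
        obtain ⟨j1, j2, j3⟩ := hi2 k hk u hu'
        have q1 := hhu ε' hε' (tP i k) t0 u u0 (xt i (tP i k)) (x u) (zt i (tP i k))
          (zt i (tP i k) - (z (tP i k) - z u)) (ϑ i) θ (hϑS i) hθS j1 j2 (by simpa using j3) hi1
        have q2 := hhLip θ hθS u u0 (x u) (x u) (zt i (tP i k) - (z (tP i k) - z u)) (z u)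
        have q3 : zt i (tP i k) - (z (tP i k) - z u) - z u = zt i (tP i k) - z (tP i k) := by abel
        rw [q3, sub_self, norm_zero, zero_add] at q2
        exact (norm_sub_le_norm_sub_add_norm_sub _ _ _).trans (add_le_add q1 q2)
      rw [abs_of_nonneg (by linarith [hs.1])] at bd
      linarith
  -- the likelihood and the prior
  have cψ : Tendsto (fun i => ψ (xt i) (zt i) (ϑ i)) atTop (nhds (ψ x z θ)) := by
    rw [Metric.tendsto_nhds]
    intro ε hε
    obtain ⟨δ, hδ, H⟩ := hψc x z θ xc hzc (ε / 2) (by positivity)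
    filter_upwards [ux δ hδ, uz δ hδ, cϑ.eventually_lt_const hδ] with i h1 h2 h3
    rw [Real.dist_eq]
    linarith [H (xt i) (zt i) (ϑ i) (xtc i) (ztc i) h1 h2 h3.le]
  have cpr : Tendsto (fun i => pr (xt i 0) (ζ i) (ϑ i)) atTop (nhds (pr (x 0) z0 θ)) := by
    have t1 := tendsto_iff_norm_sub_tendsto_zero.2 cx0
    have t2 := tendsto_iff_norm_sub_tendsto_zero.2 cζ
    have t3 := tendsto_iff_norm_sub_tendsto_zero.2 cϑ
    exact (hprc.tendsto (x 0, z0, θ)).comp (t1.prodMk_nhds (t2.prodMk_nhds t3))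
  refine aux_final (fun i => hψ0 _ _ _) (fun i => hpr0 _ _ _) (hψ0 _ _ _) (hpr0 _ _ _) cψ cpr ?_
  refine Tendsto.const_mul _ ?_
  -- the energy
  have hκ := fun i => aux_kappa (htPmono i)
  choose κ hκ using hκ
  set W : ℕ → ℕ → EuclideanSpace ℝ (Fin n) := fun i k =>
    f (tP i k) (xt i (tP i k)) (zt i (tP i k)) (ϑ i) with hW
  set v : ℕ → ℝ → EuclideanSpace ℝ (Fin n) := fun i s => G.symm (d i s - W i (κ i s)) with hv
  set u : ℝ → EuclideanSpace ℝ (Fin n) := fun t => G.symm (x' t - f t (x t) (z t) θ) with hu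
  have vstep : ∀ i, ∀ k < N i, ∀ s ∈ Ico (tP i k) (tP i (k + 1)),
      v i s = G.symm (b i k - W i k) := by
    intro i k hk s hs
    simp only [hv, hκ i k hk s hs, hb i k hk s hs]
  have vsq : ∀ i, IntegrableOn (fun s => ‖v i s‖ ^ 2) (Ioc 0 tf) ∧
      ∫ s in Ioc 0 tf, ‖v i s‖ ^ 2 = ∑ k ∈ Finset.range (N i),
        (tP i (k + 1) - tP i k) • ‖G.symm (b i k - W i k)‖ ^ 2 := by
    intro i
    have := (aux_step_s7 (htPmono i) (g := fun s => ‖v i s‖ ^ 2)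
      (b := fun k => ‖G.symm (b i k - W i k)‖ ^ 2)
      (fun k hk s hs => by simp only [vstep i k hk s hs]) (N i) le_rfl)
    rwa [htP0 i, htPN i] at this
  have vL2 : ∀ i, MemLp (v i) 2 (volume.restrict (Ioc 0 tf)) := by
    intro i
    have := (aux_step_s7 (htPmono i) (vstep i) (N i) le_rfl).1
    rw [htP0 i, htPN i] at this
    exact (memLp_two_iff_integrable_sq_norm this.1).2 (vsq i).1
  have fL2 : MemLp (fun s => f s (x s) (z s) θ) 2 (volume.restrict (Ioc 0 tf)) := by
    obtain ⟨C, hC⟩ := isCompact_Icc.exists_bound_of_continuousOn fcc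
    refine MemLp.of_bound ((fcc.mono Ioc_subset_Icc_self).aestronglyMeasurable measurableSet_Ioc)
      C ?_
    filter_upwards [ae_restrict_mem measurableSet_Ioc] with s hs
    exact hC s (Ioc_subset_Icc_self hs)
  have uL2 : MemLp u 2 (volume.restrict (Ioc 0 tf)) :=
    (G.symm : EuclideanSpace ℝ (Fin n) →L[ℝ] EuclideanSpace ℝ (Fin n)).comp_memLp'
      (x'L2.sub fL2)
  have esum : ∀ i, ∑ k ∈ Finset.range (N i), (tP i (k + 1) - tP i k) *
            ‖G.symm ((tP i (k + 1) - tP i k)⁻¹ • (xt i (tP i (k + 1)) - xt i (tP i k))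
              - W i k)‖ ^ 2 = ∫ s in Ioc 0 tf, ‖v i s‖ ^ 2 := by
    intro i
    rw [(vsq i).2]
    refine Finset.sum_congr rfl fun k hk => ?_
    have hk := Finset.mem_range.1 hk
    have : tP i (k + 1) - tP i k ≠ 0 := (sub_pos.2 (htPmono i k hk)).ne'
    rw [incr i k hk, smul_smul, inv_mul_cancel₀ this, one_smul, smul_eq_mul]
  refine Tendsto.congr (fun i => (esum i).symm) ?_
  refine aux_L2 uL2 vL2 ?_
  set C := ‖(G.symm : EuclideanSpace ℝ (Fin n) →L[ℝ] EuclideanSpace ℝ (Fin n))‖ with hC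
  have C0 : 0 ≤ C := norm_nonneg _
  have Wf : ∀ η > (0:ℝ), ∀ᶠ i in atTop, ∀ s ∈ Ico (0:ℝ) tf,
      ‖W i (κ i s) - f s (x s) (z s) θ‖ ≤ η := by
    intro η hη
    obtain ⟨ε, hε, hρ', -⟩ := ρsmall η hη
    filter_upwards [ev (ε / 2) (half_pos hε), uz (ε / 2) (half_pos hε)] with i hi hzi s hs
    obtain ⟨k, hk, hks⟩ := aux_find (htPmono i) (N i) le_rfl (s := s) (by rwa [htP0 i, htPN i])
    rw [hκ i k hk s hks]
    have hks' := Ico_subset_Icc_self hks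
    obtain ⟨j1, j2, j3⟩ := hi.2 k hk s hks'
    refine (hfu ε hε _ (tmem i k hk.le) _ (smem i k hk s hks') _ _ _ _ _ _ (hϑS i) hθS ?_ ?_ ?_ ?_).trans hρ'
    · linarith
    · linarith
    · have := norm_sub_le_norm_sub_add_norm_sub (zt i (tP i k)) (z (tP i k)) (z s)
      linarith [hzi _ (tmem i k hk.le)]
    · linarith [hi.1]
  have Id : ∀ i, IntegrableOn (fun s => ‖v i s - u s‖ ^ 2) (Ioc 0 tf) := fun i =>
    (memLp_two_iff_integrable_sq_norm ((vL2 i).sub uL2).1).1 ((vL2 i).sub uL2)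
  have hD2 : ∀ i, IntegrableOn (fun s => ‖d i s - x' s‖ ^ 2) (Ioc 0 tf) := fun i =>
      (memLp_two_iff_integrable_sq_norm ((dL2 i).sub x'L2).1).1 ((dL2 i).sub x'L2)
  have est : ∀ η > (0:ℝ), ∀ᶠ i in atTop,
      ∫ s in Ioc 0 tf, ‖v i s - u s‖ ^ 2 ≤ 2 * C ^ 2 * (e i + tf * η ^ 2) := by
    intro η hη
    filter_upwards [Wf η hη] with i hi
    have hrhs : 2 * C ^ 2 * (e i + tf * η ^ 2) =
        ∫ s in Ioc 0 tf, 2 * C ^ 2 * (‖d i s - x' s‖ ^ 2 + η ^ 2) := by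
      rw [integral_const_mul, integral_add (hD2 i) (integrableOn_const (by simp))]
      simp [he, htf.le]
    rw [hrhs, integral_Ioc_eq_integral_Ioo, integral_Ioc_eq_integral_Ioo]
    refine setIntegral_mono_on ((Id i).mono_set Ioo_subset_Ioc_self)
      (Integrable.mono_measure (((hD2 i).add (integrableOn_const (by simp))).const_mul _)
        (Measure.restrict_mono Ioo_subset_Ioc_self le_rfl)) measurableSet_Ioo ?_
    intro s hs
    have w := hi s ⟨hs.1.le, hs.2⟩
    have e1 : v i s - u s = (G.symm : EuclideanSpace ℝ (Fin n) →L[ℝ] EuclideanSpace ℝ (Fin n))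
        ((d i s - x' s) - (W i (κ i s) - f s (x s) (z s) θ)) := by
      simp only [hv, hu, ContinuousLinearEquiv.coe_coe]
      rw [← map_sub]
      congr 1
      abel
    have e2 : ‖v i s - u s‖ ≤ C * (‖d i s - x' s‖ + η) := by
      rw [e1]
      refine (ContinuousLinearMap.le_opNorm _ _).trans ?_
      gcongr
      exact (norm_sub_le _ _).trans (add_le_add le_rfl w)
    have e3 : ‖v i s - u s‖ ^ 2 ≤ (C * (‖d i s - x' s‖ + η)) ^ 2 := by gcongr
    have e4 : (‖d i s - x' s‖ + η) ^ 2 ≤ 2 * (‖d i s - x' s‖ ^ 2 + η ^ 2) := by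
      nlinarith [sq_nonneg (‖d i s - x' s‖ - η)]
    rw [mul_pow] at e3
    nlinarith [mul_le_mul_of_nonneg_left e4 (sq_nonneg C)]
  rw [Metric.tendsto_nhds]
  intro ε hε
  have hη : ∃ η > (0:ℝ), 2 * C ^ 2 * (tf * η ^ 2) < ε := by
    have : Tendsto (fun η : ℝ => 2 * C ^ 2 * (tf * η ^ 2)) (nhdsWithin 0 (Ioi 0)) (nhds 0) := by
      have : Continuous (fun η : ℝ => 2 * C ^ 2 * (tf * η ^ 2)) := by fun_prop
      have := this.tendsto 0
      simp only [ne_eq, OfNat.ofNat_ne_zero, not_false_eq_true, zero_pow, mul_zero] at this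
      exact this.mono_left nhdsWithin_le_nhds
    obtain ⟨η, h1, h2⟩ := ((this.eventually_lt_const hε).and self_mem_nhdsWithin).exists
    exact ⟨η, h2, h1⟩
  obtain ⟨η, hη, hη2⟩ := hη
  have T : Tendsto (fun i => 2 * C ^ 2 * (e i + tf * η ^ 2)) atTop
      (nhds (2 * C ^ 2 * (0 + tf * η ^ 2))) := (ce.add_const _).const_mul _
  rw [zero_add] at T
  filter_upwards [est η hη, T.eventually_lt_const hη2] with i h1 h2
  rw [Real.dist_eq, sub_zero, abs_of_nonneg (integral_nonneg fun s => by positivity)]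
  linarith
end

section
/- Let x ∈ W²_n, z₀ ∈ ℝ^q and θ ∈ int S, and let (x̂_i, ζ_i, ϑ_i) be a sequence with x̂_i ∈ PL(𝒫_i, ℝⁿ), ζ_i ∈ ℝ^q, ϑ_i ∈ S such that lim_{i→∞} (‖x̂_i − x‖_{W²} + |ζ_i − z₀| + |ϑ_i − θ|) = 0. Let ẑ_i ∈ PL(𝒫_i, ℝ^q) be the trapezoidally-discretized clean-state path associated with (x̂_i, ζ_i, ϑ_i). Then the sequence {‖ẑ_i‖_∞}_{i=1}^∞ is bounded. -/
open MeasureTheory Filter Set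

lemma aux_grid {N : ℕ} {τ : ℕ → ℝ} (hm : ∀ k < N, τ k < τ (k+1)) :
    ∀ k, ∀ j, j ≤ k → k ≤ N → τ j ≤ τ k := by
  intro k
  induction k with
  | zero => intro j hj _; obtain rfl : j = 0 := by omega
            exact le_rfl
  | succ k ih =>
    intro j hj hk
    rcases Nat.lt_or_ge j (k+1) with h | h
    · exact (ih j (by omega) (by omega)).trans (hm k (by omega)).le
    · obtain rfl : j = k+1 := by omega
      exact le_rfl

lemma aux_cover {τ : ℕ → ℝ} (t : ℝ) : ∀ k : ℕ, t ∈ Ioc (τ 0) (τ k) →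
    ∃ j < k, t ∈ Ioc (τ j) (τ (j+1)) := by
  intro k
  induction k with
  | zero => intro h; exact absurd (h.1.trans_le h.2) (lt_irrefl _)
  | succ k ih =>
    intro h
    by_cases hc : t ≤ τ k
    · obtain ⟨j, hj, hj'⟩ := ih ⟨h.1, hc⟩
      exact ⟨j, by omega, hj'⟩
    · exact ⟨k, by omega, not_le.1 hc, h.2⟩

lemma aux_int {E : Type*} [NormedAddCommGroup E] {N : ℕ} {τ : ℕ → ℝ}
    (hm : ∀ k < N, τ k < τ (k+1)) (d : ℝ → E)
    (hd : ∀ k < N, ∃ b, ∀ s ∈ Ico (τ k) (τ (k+1)), d s = b) :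
    ∀ k ≤ N, IntegrableOn d (Ico (τ 0) (τ k)) ∧
      IntegrableOn (fun s => ‖d s‖^2) (Ico (τ 0) (τ k)) := by
  intro k
  induction k with
  | zero => intro _; simp
  | succ k ih =>
    intro hk
    obtain ⟨h1, h2⟩ := ih (by omega)
    have e : Ico (τ 0) (τ (k+1)) = Ico (τ 0) (τ k) ∪ Ico (τ k) (τ (k+1)) :=
      (Ico_union_Ico_eq_Ico (aux_grid hm k 0 (by omega) (by omega)) (hm k (by omega)).le).symm
    obtain ⟨b, hb⟩ := hd k (by omega)
    rw [e]
    constructor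
    · refine h1.union ?_
      refine IntegrableOn.congr_fun (f := fun _ => b) ?_ (fun s hs => (hb s hs).symm)
        measurableSet_Ico
      exact integrableOn_const (by simp)
    · refine h2.union ?_
      refine IntegrableOn.congr_fun (f := fun _ => ‖b‖^2) ?_ (fun s hs => by simp [hb s hs])
        measurableSet_Ico
      exact integrableOn_const (by simp)

lemma aux_step_s10 {e e' δ A L κ : ℝ} (he : 0 ≤ e) (hA : 0 ≤ A) (hδ : 0 ≤ δ) (hL : 0 < L) (hκ : 0 < κ)
    (hk : κ ≤ 1 - L * δ / 2)
    (h : e' ≤ e + δ / 2 * ((A + L * e) + (A + L * e'))) :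
    e' + A / L ≤ (e + A / L) * Real.exp (L * δ / κ) := by
  set w := A / L with hw
  have hAw : A = L * w := by rw [hw]; field_simp
  have hw0 : 0 ≤ w := by positivity
  rw [hAw] at h
  set u := L * δ / 2 with hu
  have hu0 : 0 ≤ u := by positivity
  have h1 : (1 - u) * (e' + w) ≤ (1 + u) * (e + w) := by
    rw [hu]; nlinarith
  have h2 : 1 + u ≤ (1 - u) * (1 + 2 * u / κ) := by
    have : κ * (2 * u / κ) = 2 * u := by field_simp
    have h3 : 0 ≤ 2 * u / κ := by positivity
    nlinarith
  have h4 : 1 + 2 * u / κ ≤ Real.exp (L * δ / κ) := by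
    have := Real.add_one_le_exp (L * δ / κ)
    have h5 : 2 * u / κ = L * δ / κ := by rw [hu]; ring
    rw [h5]; linarith
  have h6 : (1 - u) * (e' + w) ≤ (1 - u) * ((e + w) * (1 + 2 * u / κ)) := by
    have := mul_le_mul_of_nonneg_right h2 (add_nonneg he hw0)
    linarith
  have h7 := le_of_mul_le_mul_left h6 (by linarith)
  exact h7.trans (mul_le_mul_of_nonneg_left h4 (add_nonneg he hw0))

/-- trapezoidally-discretized clean-state paths are bounded: if
`(x̂_i, ζ_i, ϑ_i) → (x, z₀, θ)` with `θ ∈ int S` and `ϑ_i ∈ S`, then the associated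
trapezoidally-discretized clean-state paths `ẑ_i` are uniformly bounded in supremum
norm. Piecewise linear `x̂_i ∈ PL(𝒫_i)` are encoded by their piecewise constant
derivatives `d i`; the `W²` function `x` by the pair `(x, x')`. -/
theorem stmt10 {n q m : ℕ} (tf : ℝ) (htf : 0 < tf)
    (N : ℕ → ℕ) (hN1 : ∀ i, 1 ≤ N i) (tP : ℕ → ℕ → ℝ)
    (htP0 : ∀ i, tP i 0 = 0) (htPN : ∀ i, tP i (N i) = tf)
    (htPmono : ∀ i, ∀ k < N i, tP i k < tP i (k + 1))
    (hnested : ∀ i, ∀ k ≤ N i, ∃ k' ≤ N (i + 1), tP (i + 1) k' = tP i k)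
    (hmesh : Tendsto (fun i => ⨆ k : Fin (N i), (tP i (k.1 + 1) - tP i k.1))
      atTop (nhds 0))
    (S : Set (EuclideanSpace ℝ (Fin m)))
    (h : ℝ → EuclideanSpace ℝ (Fin n) → EuclideanSpace ℝ (Fin q) →
      EuclideanSpace ℝ (Fin m) → EuclideanSpace ℝ (Fin q))
    (hhc : Continuous fun p : ℝ × EuclideanSpace ℝ (Fin n) × EuclideanSpace ℝ (Fin q) ×
      EuclideanSpace ℝ (Fin m) => h p.1 p.2.1 p.2.2.1 p.2.2.2)
    (Lf Lh : ℝ) (hLf : 0 < Lf) (hLh : 0 < Lh)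
    (hhLip : ∀ θ' ∈ S, ∀ t ∈ Icc (0:ℝ) tf,
      ∀ (a a' : EuclideanSpace ℝ (Fin n)) (b b' : EuclideanSpace ℝ (Fin q)),
      ‖h t a b θ' - h t a' b' θ'‖ ≤ Lh * (‖a - a'‖ + ‖b - b'‖))
    (hmeshLip : ∀ i, ∀ k < N i, (Lf + Lh) * (tP i (k + 1) - tP i k) < 2)
    -- the limit point
    (x x' : ℝ → EuclideanSpace ℝ (Fin n))
    (hInt : IntegrableOn x' (Icc 0 tf))
    (hL2 : IntegrableOn (fun t => ‖x' t‖ ^ 2) (Icc 0 tf))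
    (hAC : ∀ t ∈ Icc (0:ℝ) tf, x t = x 0 + ∫ s in Ioc (0:ℝ) t, x' s)
    (z0 : EuclideanSpace ℝ (Fin q))
    (θ : EuclideanSpace ℝ (Fin m)) (hθ : θ ∈ interior S)
    -- the approximating sequence
    (xh d : ℕ → ℝ → EuclideanSpace ℝ (Fin n))
    (hdpc : ∀ i, ∀ k < N i, ∃ b : EuclideanSpace ℝ (Fin n),
      ∀ s ∈ Ico (tP i k) (tP i (k + 1)), d i s = b)
    (hxhAC : ∀ i, ∀ s ∈ Icc (0:ℝ) tf, xh i s = xh i 0 + ∫ u in Ioc (0:ℝ) s, d i u)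
    (ζ : ℕ → EuclideanSpace ℝ (Fin q)) (ϑ : ℕ → EuclideanSpace ℝ (Fin m))
    (hϑS : ∀ i, ϑ i ∈ S)
    (hconv : Tendsto (fun i =>
      Real.sqrt (‖xh i 0 - x 0‖ ^ 2 + ∫ s in Ioc (0:ℝ) tf, ‖d i s - x' s‖ ^ 2)
      + ‖ζ i - z0‖ + ‖ϑ i - θ‖) atTop (nhds 0))
    -- the trapezoidally-discretized clean-state paths
    (zh : ℕ → ℝ → EuclideanSpace ℝ (Fin q))
    (hzh0 : ∀ i, zh i 0 = ζ i)
    (hzhrec : ∀ i, ∀ k < N i, ∀ s ∈ Ioc (tP i k) (tP i (k + 1)),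
      zh i s = zh i (tP i k) + ((s - tP i k) / 2) •
        (h (tP i k) (xh i (tP i k)) (zh i (tP i k)) (ϑ i) +
         h (tP i (k + 1)) (xh i (tP i (k + 1))) (zh i (tP i (k + 1))) (ϑ i))) :
    ∃ C : ℝ, ∀ i, ∀ t ∈ Icc (0:ℝ) tf, ‖zh i t‖ ≤ C := by
  -- uniform bound on the convergent sequence
  obtain ⟨R, hR⟩ : ∃ R : ℝ, ∀ i,
      Real.sqrt (‖xh i 0 - x 0‖ ^ 2 + ∫ s in Ioc (0:ℝ) tf, ‖d i s - x' s‖ ^ 2)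
      + ‖ζ i - z0‖ + ‖ϑ i - θ‖ ≤ R := by
    obtain ⟨R, hR⟩ := hconv.bddAbove_range
    exact ⟨R, fun i => hR ⟨i, rfl⟩⟩
  have hI0 : ∀ i, 0 ≤ ∫ s in Ioc (0:ℝ) tf, ‖d i s - x' s‖ ^ 2 := fun i =>
    integral_nonneg fun s => by positivity
  have hζ : ∀ i, ‖ζ i‖ ≤ R + ‖z0‖ := fun i => by
    have h1 := hR i
    have h2 := norm_le_norm_add_norm_sub' (ζ i) z0
    have h3 := norm_nonneg (ϑ i - θ)
    have := Real.sqrt_nonneg (‖xh i 0 - x 0‖ ^ 2 + ∫ s in Ioc (0:ℝ) tf, ‖d i s - x' s‖ ^ 2)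
    linarith
  have hϑ : ∀ i, ‖ϑ i - θ‖ ≤ R := fun i => by
    have h1 := hR i
    have h3 := norm_nonneg (ζ i - z0)
    have := Real.sqrt_nonneg (‖xh i 0 - x 0‖ ^ 2 + ∫ s in Ioc (0:ℝ) tf, ‖d i s - x' s‖ ^ 2)
    linarith
  have hR0 : 0 ≤ R := (norm_nonneg _).trans (hϑ 0)
  have hsq : ∀ i, ‖xh i 0 - x 0‖ ^ 2 + ∫ s in Ioc (0:ℝ) tf, ‖d i s - x' s‖ ^ 2 ≤ R ^ 2 := fun i => by
    have h1 := hR i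
    have h3 := norm_nonneg (ζ i - z0)
    have h4 := norm_nonneg (ϑ i - θ)
    exact (Real.sqrt_le_left hR0).1 (by linarith)
  have hInt' : IntegrableOn x' (Ioc 0 tf) := hInt.mono_set Ioc_subset_Icc_self
  have hL2' : IntegrableOn (fun t => ‖x' t‖ ^ 2) (Ioc 0 tf) := hL2.mono_set Ioc_subset_Icc_self
  -- bound on xh
  obtain ⟨X, hX⟩ : ∃ X : ℝ, ∀ i, ∀ s ∈ Icc (0:ℝ) tf, ‖xh i s‖ ≤ X := by
    refine ⟨‖x 0‖ + R + (tf + R ^ 2 + ∫ s in Ioc (0:ℝ) tf, ‖x' s‖), fun i s hs => ?_⟩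
    obtain ⟨hd1, hd2⟩ := aux_int (htPmono i) (d i) (hdpc i) (N i) le_rfl
    rw [htP0, htPN, ← integrableOn_Icc_iff_integrableOn_Ico,
      integrableOn_Icc_iff_integrableOn_Ioc] at hd1 hd2
    have hdx : IntegrableOn (fun s => ‖d i s - x' s‖ ^ 2) (Ioc 0 tf) := by
      refine Integrable.mono' ((hd2.const_mul 2).add (hL2'.const_mul 2))
        ((hd1.aestronglyMeasurable.sub hInt'.aestronglyMeasurable).norm.pow 2) ?_
      refine Eventually.of_forall fun s => ?_
      have h1 := norm_sub_le (d i s) (x' s)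
      have h0 := norm_nonneg (d i s - x' s)
      simp only [Pi.add_apply, norm_pow, norm_norm]
      nlinarith [sq_nonneg (‖d i s‖ - ‖x' s‖)]
    have hxi0 : ‖xh i 0‖ ≤ ‖x 0‖ + R := by
      have h1 : ‖xh i 0 - x 0‖ ≤ R := by
        have := hsq i
        have := hI0 i
        exact abs_le_of_sq_le_sq' (by linarith) hR0 |>.2
      have h2 := norm_le_norm_add_norm_sub' (xh i 0) (x 0)
      linarith
    have hone : IntegrableOn (fun _ : ℝ => (1:ℝ)) (Ioc 0 tf) := integrableOn_const (by simp)
    have hint : ‖∫ u in Ioc (0:ℝ) s, d i u‖ ≤ tf + R ^ 2 + ∫ s in Ioc (0:ℝ) tf, ‖x' s‖ := by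
      calc ‖∫ u in Ioc (0:ℝ) s, d i u‖ ≤ ∫ u in Ioc (0:ℝ) s, ‖d i u‖ :=
            norm_integral_le_integral_norm _
        _ ≤ ∫ u in Ioc (0:ℝ) tf, ‖d i u‖ :=
            setIntegral_mono_set hd1.norm (Eventually.of_forall fun _ => norm_nonneg _)
              (Eventually.of_forall (Ioc_subset_Ioc_right hs.2))
        _ ≤ ∫ u in Ioc (0:ℝ) tf, ((1 + ‖d i u - x' u‖ ^ 2) + ‖x' u‖) := by
            refine integral_mono hd1.norm ((hone.add hdx).add hInt'.norm) fun u => ?_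
            have h2 := norm_le_norm_add_norm_sub' (d i u) (x' u)
            simp only
            nlinarith [sq_nonneg (‖d i u - x' u‖ - 1)]
        _ = tf + (∫ u in Ioc (0:ℝ) tf, ‖d i u - x' u‖ ^ 2) + ∫ s in Ioc (0:ℝ) tf, ‖x' s‖ := by
            have e1 := integral_add (hone.add hdx) hInt'.norm
            have e2 := integral_add hone hdx
            simp only [Pi.add_apply] at e1
            rw [e1, e2]
            simp [htf.le]
        _ ≤ _ := by
            have := hsq i
            have := sq_nonneg ‖xh i 0 - x 0‖
            linarith
    rw [hxhAC i s hs]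
    exact (norm_add_le _ _).trans (add_le_add hxi0 hint)
  have hX0 : 0 ≤ X := (norm_nonneg _).trans (hX 0 0 ⟨le_rfl, htf.le⟩)
  -- bound on h
  obtain ⟨M, hM⟩ : ∃ M : ℝ, ∀ i, ∀ t ∈ Icc (0:ℝ) tf, ‖h t 0 0 (ϑ i)‖ ≤ M := by
    have hc : Continuous fun p : ℝ × EuclideanSpace ℝ (Fin m) => h p.1 0 0 p.2 :=
      hhc.comp (f := fun p : ℝ × EuclideanSpace ℝ (Fin m) =>
        (p.1, (0 : EuclideanSpace ℝ (Fin n)), (0 : EuclideanSpace ℝ (Fin q)), p.2)) (by fun_prop)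
    obtain ⟨M, hM⟩ := ((isCompact_Icc (a := (0:ℝ)) (b := tf)).prod
      (isCompact_closedBall θ R)).exists_bound_of_continuousOn hc.continuousOn
    exact ⟨M, fun i t ht => hM (t, ϑ i) ⟨ht, by simpa [dist_eq_norm] using hϑ i⟩⟩
  have hM0 : 0 ≤ M := (norm_nonneg _).trans (hM 0 0 ⟨le_rfl, htf.le⟩)
  set A := M + Lh * X with hA
  have hA0 : 0 ≤ A := by positivity
  have hhb : ∀ i, ∀ t ∈ Icc (0:ℝ) tf, ∀ b, ‖h t (xh i t) b (ϑ i)‖ ≤ A + Lh * ‖b‖ := by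
    intro i t ht b
    have h1 := hhLip (ϑ i) (hϑS i) t ht (xh i t) 0 b 0
    have h2 := norm_le_norm_add_norm_sub' (h t (xh i t) b (ϑ i)) (h t 0 0 (ϑ i))
    have h3 := hM i t ht
    have h4 := mul_le_mul_of_nonneg_left (hX i t ht) hLh.le
    rw [sub_zero, sub_zero, mul_add] at h1
    linarith
  have hgrid : ∀ i, ∀ k ≤ N i, tP i k ∈ Icc (0:ℝ) tf := fun i k hk =>
    ⟨htP0 i ▸ aux_grid (htPmono i) k 0 (by omega) hk,
      htPN i ▸ aux_grid (htPmono i) (N i) k hk le_rfl⟩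
  have hstep : ∀ i, ∀ k < N i, ∀ s ∈ Ioc (tP i k) (tP i (k + 1)),
      ‖zh i s‖ ≤ ‖zh i (tP i k)‖ + (s - tP i k) / 2 *
        ((A + Lh * ‖zh i (tP i k)‖) + (A + Lh * ‖zh i (tP i (k+1))‖)) := by
    intro i k hk s hs
    rw [hzhrec i k hk s hs]
    refine (norm_add_le _ _).trans (add_le_add le_rfl ?_)
    have h0 : 0 ≤ (s - tP i k) / 2 := by linarith [hs.1]
    rw [norm_smul, Real.norm_of_nonneg h0]
    refine mul_le_mul_of_nonneg_left ?_ h0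
    exact (norm_add_le _ _).trans (add_le_add (hhb i _ (hgrid i k hk.le) _)
      (hhb i _ (hgrid i (k+1) hk) _))
  set κ := Lf / (Lf + Lh) with hκ
  have hκ0 : 0 < κ := by positivity
  have hgron : ∀ i, ∀ k ≤ N i, ‖zh i (tP i k)‖ + A / Lh ≤
      (R + ‖z0‖ + A / Lh) * Real.exp (Lh * tP i k / κ) := by
    intro i k
    induction k with
    | zero => intro _; rw [htP0, hzh0]; simpa using hζ i
    | succ k ih =>
      intro hk
      have hlt := htPmono i k hk
      have h1 := hstep i k hk _ ⟨hlt, le_rfl⟩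
      have hκle : κ ≤ 1 - Lh * (tP i (k+1) - tP i k) / 2 := by
        have h2 := hmeshLip i k hk
        rw [hκ, div_le_iff₀ (by positivity)]
        nlinarith
      have h2 := aux_step_s10 (norm_nonneg _) hA0 (sub_nonneg.2 hlt.le) hLh hκ0 hκle h1
      refine h2.trans ?_
      refine (mul_le_mul_of_nonneg_right (ih (by omega)) (Real.exp_pos _).le).trans ?_
      rw [mul_assoc, ← Real.exp_add]
      refine le_of_eq ?_
      congr 2
      ring
  set W := (R + ‖z0‖ + A / Lh) * Real.exp (Lh * tf / κ) with hW
  have hWb : ∀ i, ∀ k ≤ N i, ‖zh i (tP i k)‖ ≤ W := by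
    intro i k hk
    have h1 := hgron i k hk
    have h2 : (R + ‖z0‖ + A / Lh) * Real.exp (Lh * tP i k / κ) ≤ W := by
      rw [hW]
      have := (hgrid i k hk).2
      gcongr
    have h3 : 0 ≤ A / Lh := by positivity
    linarith
  have hW0 : 0 ≤ W := (norm_nonneg _).trans (hWb 0 0 (Nat.zero_le _))
  refine ⟨W + tf / 2 * ((A + Lh * W) + (A + Lh * W)), fun i t ht => ?_⟩
  rcases ht.1.eq_or_lt with h0 | h0
  · have := hWb i 0 (Nat.zero_le _)
    rw [htP0, h0] at this
    have : 0 ≤ tf / 2 * ((A + Lh * W) + (A + Lh * W)) := by positivity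
    linarith
  · obtain ⟨k, hk, hkt⟩ := aux_cover (τ := tP i) t (N i)
      ⟨by rw [htP0]; exact h0, by rw [htPN]; exact ht.2⟩
    refine (hstep i k hk t hkt).trans ?_
    have h1 := hWb i k hk.le
    have h2 := hWb i (k+1) hk
    have h3 := (hgrid i k hk.le).1
    have h4 : (t - tP i k) / 2 ≤ tf / 2 := by linarith [ht.2]
    have h5 : 0 ≤ (t - tP i k) / 2 := by linarith [hkt.1]
    gcongr
end
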